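/- arXiv:2206.11295 — 3 statements merged into one kernel-verified Lean document; each statement's English description precedes it below -/
import Mathlib

section
/- Let m ≥ 2 and let B_1,…,B_n (n ≥ 2) be a partition of {1,…,m} into nonempty blocks; write k ≁ l if k,l lie in different blocks, and for each i let F_i = {x ∈ ℝ^m : x_k = 0 for all k ∉ B_i}. Suppose given: (i) for each i, a smooth positive function h_i defined on a neighborhood of 0 in the block-B_i coordinate subspace (identified with ℝ^{|B_i|}), with h_1(0) = h_2(0) = … = h_n(0); (ii) smooth functions A_{kl}, defined on a neighborhood of 0 in ℝ^m for each pair k ≁ l, satisfying A_{kl} = A_{lk} and the compatibility condition ∂_a A_{bc} = ∂_b A_{ac} for all indices a,b,c with a ≁ c and b ≁ c. Then there exist a neighborhood U of 0 in ℝ^m and a unique smooth positive function h : U → ℝ such that h(x) = h_i(x_{B_i}) for every x ∈ U ∩ F_i and every i, and ∂²(log h)/∂x_k∂x_l = A_{kl} on U for every pair k ≁ l. (Uniqueness means: any two such functions agree on a neighborhood of 0.) -/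
open MeasureTheory

noncomputable section

/-- Partial derivative `∂f/∂x_a` at `x`. -/
def pd {m : ℕ} (f : (Fin m → ℝ) → ℝ) (a : Fin m) (x : Fin m → ℝ) : ℝ :=
  fderiv ℝ f x (Pi.single a (1:ℝ))

/-- Second mixed partial derivative `∂²(log h)/∂x_k∂x_l` at `x`. -/
def logpd2 {m : ℕ} (h : (Fin m → ℝ) → ℝ) (k l : Fin m) (x : Fin m → ℝ) : ℝ :=
  fderiv ℝ (fun y => fderiv ℝ (fun z => Real.log (h z)) y (Pi.single k (1:ℝ)))
    x (Pi.single l 1)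

/-!
Write `f = log h`. A function on a convex domain stable under coordinate projections is determined
by its values on the leaves through `0` and its cross-block second derivatives: for the difference
`u` of two solutions, `∂_k u` vanishes on the leaf of the block of `k` and has zero derivatives
transversally to it, so `∂_k u = 0` for all `k`.

For existence, `f = S + Φ`. The sum `S` of the functions `log h_i(x_{B_i})`, normalised by a
constant, has the prescribed restrictions and no cross-block second derivatives. The function `Φ`
vanishes on the leaves and comes from two uses of a Poincaré lemma relative to the fibres of a
coordinate projection. First, `θ_k`, the future `∂_k Φ`, is the primitive vanishing on the leaf of
the block of `k` of the transversal form `∑ A_kl dx_l`, closed by compatibility. Next,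
`∑ θ_k dx_k` is closed: its cross-block components are symmetric because `A` is, and
`∂_j θ_k - ∂_k θ_j` for `j`, `k` in one block vanishes on the leaf and has zero transversal
derivatives, again by compatibility. Its primitive is `Φ`.
-/

open Function Metric Set Topology
open scoped ContDiff

universe u

section ParametricIntegral

theorem continuousOn_of_continuousAt_uncurry {X Y Z : Type*} [TopologicalSpace X]
    [TopologicalSpace Y] [TopologicalSpace Z] {K : X → Y → Z} {x : X} {s : Set Y}
    (hK : ∀ y ∈ s, ContinuousAt (uncurry K) (x, y)) : ContinuousOn (K x) s :=
  fun y hy ↦ ((hK y hy).comp (f := fun y ↦ (x, y)) (by fun_prop)).continuousWithinAt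

section

variable {E F : Type*} [NormedAddCommGroup E] [NormedSpace ℝ E]
  [NormedAddCommGroup F] [NormedSpace ℝ F] {G : E → ℝ → F} {x : E}

theorem contDiffAt_uncurry_fderiv_left {n : ℕ∞ω} {t : ℝ}
    (hG : ContDiffAt ℝ (n + 1) (uncurry G) (x, t)) :
    ContDiffAt ℝ n (uncurry fun y s ↦ fderiv ℝ (G · s) y) (x, t) :=
  ContDiffAt.fderiv (f := fun (p : E × ℝ) y ↦ G y p.2) (g := Prod.fst)
    (hG.comp ((x, t), x) (f := fun q : (E × ℝ) × E ↦ (q.2, q.1.2)) (by fun_prop))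
    contDiffAt_fst le_rfl

variable {a b : ℝ}

theorem eventually_forall_uIcc_contDiffAt_one
    (hG : ∀ t ∈ uIcc a b, ContDiffAt ℝ 1 (uncurry G) (x, t)) :
    ∀ᶠ y in 𝓝 x, ∀ t ∈ uIcc a b, ContDiffAt ℝ 1 (uncurry G) (y, t) :=
  isCompact_uIcc.eventually_forall_of_forall_eventually fun t ht ↦
    (hG t ht).eventually (by simp)

theorem continuousAt_uncurry_fderiv_left {t : ℝ} (hG : ContDiffAt ℝ 1 (uncurry G) (x, t)) :
    ContinuousAt (uncurry fun y s ↦ fderiv ℝ (G · s) y) (x, t) :=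
  (contDiffAt_uncurry_fderiv_left (n := 0) (by simpa using hG)).continuousAt

theorem continuousOn_fderiv_left
    (hG : ∀ t ∈ uIcc a b, ContDiffAt ℝ 1 (uncurry G) (x, t)) :
    ContinuousOn (fun t ↦ fderiv ℝ (G · t) x) (uIcc a b) :=
  continuousOn_of_continuousAt_uncurry (K := fun y s ↦ fderiv ℝ (G · s) y) fun t ht ↦
    continuousAt_uncurry_fderiv_left (hG t ht)

theorem hasFDerivAt_intervalIntegral_of_contDiffAt
    (hG : ∀ t ∈ uIcc a b, ContDiffAt ℝ 1 (uncurry G) (x, t)) :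
    HasFDerivAt (fun y ↦ ∫ t in a..b, G y t) (∫ t in a..b, fderiv ℝ (G · t) x) x := by
  have hD : ∀ t ∈ uIcc a b, ContinuousAt (uncurry fun y s ↦ fderiv ℝ (G · s) y) (x, t) :=
    fun t ht ↦ continuousAt_uncurry_fderiv_left (hG t ht)
  obtain ⟨C, hC⟩ := isCompact_uIcc.exists_bound_of_continuousOn (continuousOn_fderiv_left hG)
  have hbound : ∀ᶠ y in 𝓝 x, ∀ t ∈ uIcc a b, ‖fderiv ℝ (G · t) y‖ < C + 1 :=
    isCompact_uIcc.eventually_forall_of_forall_eventually fun t ht ↦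
      (hD t ht).norm.eventually_lt_const ((hC t ht).trans_lt (lt_add_one C))
  have hsmooth := eventually_forall_uIcc_contDiffAt_one hG
  have hslice : ∀ᶠ y in 𝓝 x, ContinuousOn (G y) (uIcc a b) :=
    hsmooth.mono fun y hy ↦ continuousOn_of_continuousAt_uncurry fun t ht ↦ (hy t ht).continuousAt
  refine intervalIntegral.hasFDerivAt_integral_of_dominated_of_fderiv_le (bound := fun _ ↦ C + 1)
    (hsmooth.and hbound) (hslice.mono fun y hy ↦ ?_) hslice.self_of_nhds.intervalIntegrable
    (continuousOn_fderiv_left hG).intervalIntegrable.def'.aestronglyMeasurable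
    (.of_forall fun t ht y hy ↦ (hy.2 t (uIoc_subset_uIcc ht)).le) intervalIntegrable_const
    (.of_forall fun t ht y hy ↦ ?_)
  · exact (hy.mono uIoc_subset_uIcc).aestronglyMeasurable measurableSet_uIoc
  · exact (((hy.1 t (uIoc_subset_uIcc ht)).comp y (f := fun z ↦ (z, t))
      (by fun_prop)).differentiableAt (by simp)).hasFDerivAt

end

theorem contDiffAt_infty_intervalIntegral {E F : Type u} [NormedAddCommGroup E] [NormedSpace ℝ E]
    [NormedAddCommGroup F] [NormedSpace ℝ F] {G : E → ℝ → F} {x : E} {a b : ℝ}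
    (hG : ∀ t ∈ uIcc a b, ContDiffAt ℝ ∞ (uncurry G) (x, t)) :
    ContDiffAt ℝ ∞ (fun y ↦ ∫ t in a..b, G y t) x := by
  rw [contDiffAt_infty]
  intro n
  induction n generalizing F with
  | zero =>
    have hC1 := eventually_forall_uIcc_contDiffAt_one fun t ht ↦ (hG t ht).of_le (by simp)
    exact contDiffAt_zero.2 ⟨_, hC1, fun y hy ↦
      (hasFDerivAt_intervalIntegral_of_contDiffAt hy).continuousAt.continuousWithinAt⟩
  | succ n ih =>
    have hC1 := eventually_forall_uIcc_contDiffAt_one fun t ht ↦ (hG t ht).of_le (by simp)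
    exact contDiffAt_succ_iff_hasFDerivAt.2 ⟨fun y ↦ ∫ t in a..b, fderiv ℝ (G · t) y,
      ⟨_, hC1, fun y hy ↦ hasFDerivAt_intervalIntegral_of_contDiffAt hy⟩,
      ih fun t ht ↦ contDiffAt_uncurry_fderiv_left (hG t ht)⟩

end ParametricIntegral

section RelativePrimitive

variable {E F : Type u} [NormedAddCommGroup E] [NormedSpace ℝ E]
  [NormedAddCommGroup F] [NormedSpace ℝ F]

/-- For a projection `P`, the primitive of the one-form `α` along the fibres of `P` that vanishes
on the range of `P`: the integral of `α` over the segment from `P x` to `x`. -/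
def relPrimitive (P : E →L[ℝ] E) (α : E → E →L[ℝ] F) (x : E) : F :=
  ∫ t in (0 : ℝ)..1, α (P x + t • (x - P x)) (x - P x)

variable {P : E →L[ℝ] E} {α : E → E →L[ℝ] F} {x : E}

theorem relPrimitive_eq_zero (hx : P x = x) : relPrimitive P α x = 0 := by
  simp [relPrimitive, hx]

variable {U : Set E} (hUo : IsOpen U) (hUc : Convex ℝ U) (hPU : MapsTo P U U)
  (hα : ContDiffOn ℝ ∞ α U) (hx : x ∈ U)
include hUo hUc hPU hα hx

theorem contDiffAt_relPrimitive_integrand {t : ℝ} (ht : t ∈ uIcc (0 : ℝ) 1) :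
    ContDiffAt ℝ ∞ (uncurry fun y s ↦ α (P y + s • (y - P y)) (y - P y)) (x, t) := by
  rw [uIcc_of_le zero_le_one] at ht
  have hα' : ContDiffAt ℝ ∞ α (P x + t • (x - P x)) :=
    hα.contDiffAt (hUo.mem_nhds (hUc.add_smul_sub_mem (hPU hx) hx ht))
  exact (hα'.comp (x, t) (f := fun p : E × ℝ ↦ P p.1 + p.2 • (p.1 - P p.1))
    (by fun_prop)).clm_apply (by fun_prop)

theorem contDiffAt_relPrimitive : ContDiffAt ℝ ∞ (relPrimitive P α) x :=
  contDiffAt_infty_intervalIntegral fun _ ht ↦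
    contDiffAt_relPrimitive_integrand hUo hUc hPU hα hx ht

theorem fderiv_relPrimitive_integrand_apply {v : E} (hv : P v = 0) {t : ℝ}
    (ht : t ∈ uIcc (0 : ℝ) 1) :
    fderiv ℝ (fun y ↦ α (P y + t • (y - P y)) (y - P y)) x v =
      α (P x + t • (x - P x)) v + t • fderiv ℝ α (P x + t • (x - P x)) v (x - P x) := by
  rw [uIcc_of_le zero_le_one] at ht
  have hα' : DifferentiableAt ℝ α (P x + t • (x - P x)) :=
    (hα.contDiffAt (hUo.mem_nhds (hUc.add_smul_sub_mem (hPU hx) hx ht))).differentiableAt (by simp)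
  have hid : HasFDerivAt (fun y ↦ y - P y) (.id ℝ E - P) x :=
    (hasFDerivAt_id x).sub P.hasFDerivAt
  have hγ : HasFDerivAt (fun y ↦ P y + t • (y - P y)) (P + t • (.id ℝ E - P)) x :=
    P.hasFDerivAt.add (hid.const_smul t)
  have hαγ : HasFDerivAt (fun y ↦ α (P y + t • (y - P y)))
      ((fderiv ℝ α (P x + t • (x - P x))).comp (P + t • (.id ℝ E - P))) x :=
    HasFDerivAt.comp (f := fun y ↦ P y + t • (y - P y)) x hα'.hasFDerivAt hγ
  rw [(hαγ.clm_apply hid).fderiv]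
  simp [hv]

theorem hasDerivAt_smul_relPrimitive_segment (v : E) {t : ℝ} (ht : t ∈ uIcc (0 : ℝ) 1) :
    HasDerivAt (fun s : ℝ ↦ s • α (P x + s • (x - P x)) v)
      (α (P x + t • (x - P x)) v + t • fderiv ℝ α (P x + t • (x - P x)) (x - P x) v) t := by
  rw [uIcc_of_le zero_le_one] at ht
  have hα' : DifferentiableAt ℝ α (P x + t • (x - P x)) :=
    (hα.contDiffAt (hUo.mem_nhds (hUc.add_smul_sub_mem (hPU hx) hx ht))).differentiableAt (by simp)
  have hγ : HasDerivAt (fun s : ℝ ↦ P x + s • (x - P x)) (x - P x) t := by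
    simpa using ((hasDerivAt_id t).smul_const (x - P x)).const_add (P x)
  have hαγ : HasDerivAt (fun s : ℝ ↦ α (P x + s • (x - P x)) v)
      (fderiv ℝ α (P x + t • (x - P x)) (x - P x) v) t :=
    (ContinuousLinearMap.apply ℝ F v).hasFDerivAt.comp_hasDerivAt t
      (HasFDerivAt.comp_hasDerivAt t hα'.hasFDerivAt hγ)
  simpa only [one_smul, add_comm] using (hasDerivAt_id' t).fun_smul hαγ

theorem fderiv_relPrimitive_apply [CompleteSpace F]
    (hclosed : ∀ y ∈ U, ∀ u v, P u = 0 → P v = 0 → fderiv ℝ α y u v = fderiv ℝ α y v u)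
    (hP : ∀ y, P (P y) = P y) {v : E} (hv : P v = 0) :
    fderiv ℝ (relPrimitive P α) x v = α x v := by
  have hG := fun t ht ↦ (contDiffAt_relPrimitive_integrand hUo hUc hPU hα hx (t := t) ht).of_le
    (m := 1) (by simp)
  have hcont := continuousOn_fderiv_left hG
  have hderiv : fderiv ℝ (relPrimitive P α) x =
      ∫ t in (0 : ℝ)..1, fderiv ℝ (fun y ↦ α (P y + t • (y - P y)) (y - P y)) x :=
    (hasFDerivAt_intervalIntegral_of_contDiffAt hG).fderiv
  -- Closedness makes the derivative of the integrand along `v` the derivative of `t • α (γ t) v`,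
  -- where `γ` is the segment from `P x` to `x`.
  have hantideriv : ∀ t ∈ uIcc (0 : ℝ) 1, HasDerivAt (fun s : ℝ ↦ s • α (P x + s • (x - P x)) v)
      (fderiv ℝ (fun y ↦ α (P y + t • (y - P y)) (y - P y)) x v) t := by
    intro t ht
    have hγU : P x + t • (x - P x) ∈ U :=
      hUc.add_smul_sub_mem (hPU hx) hx (uIcc_of_le (zero_le_one' ℝ) ▸ ht)
    rw [fderiv_relPrimitive_integrand_apply hUo hUc hPU hα hx hv ht,
      hclosed _ hγU v (x - P x) hv (by simp [hP])]
    exact hasDerivAt_smul_relPrimitive_segment hUo hUc hPU hα hx v ht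
  rw [hderiv, ContinuousLinearMap.intervalIntegral_apply hcont.intervalIntegrable,
    intervalIntegral.integral_eq_sub_of_hasDerivAt hantideriv
      (hcont.clm_apply continuousOn_const).intervalIntegrable]
  simp

end RelativePrimitive

section PartialDerivatives

variable {m : ℕ} {f g : (Fin m → ℝ) → ℝ} {U : Set (Fin m → ℝ)} {x : Fin m → ℝ}

theorem fderiv_apply_eq_sum_pd (f : (Fin m → ℝ) → ℝ) (x v : Fin m → ℝ) :
    fderiv ℝ f x v = ∑ k, v k * pd f k x := by
  conv_lhs => rw [pi_eq_sum_univ' v]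
  simp [pd]

theorem differentiableAt_of_contDiffOn (hU : IsOpen U) (hf : ContDiffOn ℝ ∞ f U) (hx : x ∈ U) :
    DifferentiableAt ℝ f x :=
  (hf.contDiffAt (hU.mem_nhds hx)).differentiableAt (by simp)

theorem contDiffOn_pd (hU : IsOpen U) (hf : ContDiffOn ℝ ∞ f U) (k : Fin m) :
    ContDiffOn ℝ ∞ (pd f k) U :=
  (hf.fderiv_of_isOpen hU (by simp)).clm_apply contDiffOn_const

theorem pd_congr_of_eqOn (hU : IsOpen U) (hfg : EqOn f g U) (k : Fin m) :
    EqOn (pd f k) (pd g k) U :=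
  fun _ hx ↦ by simp only [pd, (hfg.eventuallyEq_of_mem (hU.mem_nhds hx)).fderiv_eq]

theorem pd_comm (hU : IsOpen U) (hf : ContDiffOn ℝ ∞ f U) (k l : Fin m) (hx : x ∈ U) :
    pd (pd f k) l x = pd (pd f l) k x := by
  have hfx := hf.contDiffAt (hU.mem_nhds hx)
  have hdiff : DifferentiableAt ℝ (fderiv ℝ f) x :=
    (hfx.fderiv_right (m := ∞) (by simp)).differentiableAt (by simp)
  have hsymm : IsSymmSndFDerivAt ℝ f x := hfx.isSymmSndFDerivAt (by simpa using ENat.LEInfty.out)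
  have hpd : ∀ i j, pd (pd f i) j x =
      fderiv ℝ (fderiv ℝ f) x (Pi.single j 1) (Pi.single i 1) := fun i j ↦ by
    have := (hdiff.hasFDerivAt.clm_apply (hasFDerivAt_const (Pi.single i (1 : ℝ)) x)).fderiv
    change fderiv ℝ (fun y ↦ fderiv ℝ f y (Pi.single i 1)) x (Pi.single j 1) = _
    simp [this]
  rw [hpd, hpd, hsymm.eq]

theorem pd_sub (hf : DifferentiableAt ℝ f x) (hg : DifferentiableAt ℝ g x) (k : Fin m) :
    pd (f - g) k x = pd f k x - pd g k x := by
  simp [pd, fderiv_sub hf hg]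

theorem pd_add (hf : DifferentiableAt ℝ f x) (hg : DifferentiableAt ℝ g x) (k : Fin m) :
    pd (f + g) k x = pd f k x + pd g k x := by
  simp [pd, fderiv_add hf hg]

theorem pd_pd_sub (hU : IsOpen U) (hf : ContDiffOn ℝ ∞ f U) (hg : ContDiffOn ℝ ∞ g U)
    (k l : Fin m) (hx : x ∈ U) :
    pd (pd (f - g) k) l x = pd (pd f k) l x - pd (pd g k) l x := by
  have hpd : EqOn (pd (f - g) k) (pd f k - pd g k) U := fun y hy ↦
    pd_sub (differentiableAt_of_contDiffOn hU hf hy) (differentiableAt_of_contDiffOn hU hg hy) k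
  rw [pd_congr_of_eqOn hU hpd l hx,
    pd_sub (differentiableAt_of_contDiffOn hU (contDiffOn_pd hU hf k) hx)
      (differentiableAt_of_contDiffOn hU (contDiffOn_pd hU hg k) hx)]

theorem pd_pd_add (hU : IsOpen U) (hf : ContDiffOn ℝ ∞ f U) (hg : ContDiffOn ℝ ∞ g U)
    (k l : Fin m) (hx : x ∈ U) :
    pd (pd (f + g) k) l x = pd (pd f k) l x + pd (pd g k) l x := by
  have hpd : EqOn (pd (f + g) k) (pd f k + pd g k) U := fun y hy ↦
    pd_add (differentiableAt_of_contDiffOn hU hf hy) (differentiableAt_of_contDiffOn hU hg hy) k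
  rw [pd_congr_of_eqOn hU hpd l hx,
    pd_add (differentiableAt_of_contDiffOn hU (contDiffOn_pd hU hf k) hx)
      (differentiableAt_of_contDiffOn hU (contDiffOn_pd hU hg k) hx)]

theorem pd_eq_zero_of_eqOn_zero {K : Set (Fin m → ℝ)} (hf : EqOn f 0 K) (hx : x ∈ K) {k : Fin m}
    (hK : ∀ᶠ t : ℝ in 𝓝 0, x + t • Pi.single k 1 ∈ K) : pd f k x = 0 := by
  by_cases hd : DifferentiableAt ℝ f x
  · have hmin : IsMinOn f K x := fun y hy ↦ by simp [hf hx, hf hy]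
    rw [pd, ← hd.lineDeriv_eq_fderiv, hmin.lineDeriv_eq_zero hK]
  · simp [pd, fderiv_zero_of_not_differentiableAt hd]

theorem pd_eq_zero_of_dependsOn {s : Set (Fin m)} (hf : DependsOn f s) {k : Fin m} (hk : k ∉ s) :
    pd f k x = 0 := by
  have hline : ∀ t : ℝ, f (x + t • Pi.single k 1) = f x := fun t ↦
    hf fun j hj ↦ by simp [ne_of_mem_of_not_mem hj hk]
  by_cases hd : DifferentiableAt ℝ f x
  · rw [pd, ← hd.lineDeriv_eq_fderiv]
    simp [lineDeriv, hline]
  · simp [pd, fderiv_zero_of_not_differentiableAt hd]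

end PartialDerivatives

section CoordinateProjections

variable {m : ℕ} {f : (Fin m → ℝ) → ℝ} {U : Set (Fin m → ℝ)} {s : Finset (Fin m)}
  {x : Fin m → ℝ}

/-- The coordinate projection of `ℝ^m` replacing the coordinates in `s` by zero. -/
def zeroOn (s : Finset (Fin m)) : (Fin m → ℝ) →L[ℝ] (Fin m → ℝ) :=
  .pi fun k ↦ if k ∈ s then 0 else .proj k

theorem zeroOn_apply (s : Finset (Fin m)) (x : Fin m → ℝ) (k : Fin m) :
    zeroOn s x k = if k ∈ s then 0 else x k := by
  by_cases hk : k ∈ s <;> simp [zeroOn, hk]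

theorem zeroOn_zeroOn (s : Finset (Fin m)) (x : Fin m → ℝ) :
    zeroOn s (zeroOn s x) = zeroOn s x := by
  ext k
  simp only [zeroOn_apply]
  grind

theorem zeroOn_eq_self (hx : ∀ l ∈ s, x l = 0) : zeroOn s x = x := by
  ext k
  simp only [zeroOn_apply]
  grind

theorem zeroOn_eq_zero_iff : zeroOn s x = 0 ↔ ∀ k ∉ s, x k = 0 := by
  simp [funext_iff, zeroOn_apply]

/-- An open convex subset of `ℝ^m` stable under all coordinate projections: a domain on which
functions are controlled by their partial derivatives and their values on coordinate subspaces. -/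
structure IsCoordinateDomain (U : Set (Fin m → ℝ)) : Prop where
  isOpen : IsOpen U
  convex : Convex ℝ U
  mapsTo_zeroOn (s : Finset (Fin m)) : MapsTo (zeroOn s) U U

theorem isCoordinateDomain_ball (m : ℕ) (r : ℝ) :
    IsCoordinateDomain (ball (0 : Fin m → ℝ) r) where
  isOpen := isOpen_ball
  convex := convex_ball 0 r
  mapsTo_zeroOn s x hx := by
    rw [mem_ball_zero_iff] at hx ⊢
    refine (pi_norm_le_iff_of_nonneg (norm_nonneg x)).2 (fun k ↦ ?_) |>.trans_lt hx
    rw [zeroOn_apply]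
    split_ifs
    · simp
    · exact norm_le_pi_norm x k

theorem eq_of_sub_mul_pd_eq_zero {y : Fin m → ℝ} (hf : ∀ z ∈ segment ℝ x y, DifferentiableAt ℝ f z)
    (hpd : ∀ z ∈ segment ℝ x y, ∀ k, (y k - x k) * pd f k z = 0) : f x = f y := by
  obtain ⟨z, hz, hfz⟩ := domain_mvt (fun z hz ↦ (hf z hz).hasFDerivAt.hasFDerivWithinAt)
    (convex_segment x y) (left_mem_segment ℝ x y) (right_mem_segment ℝ x y)
  simp only [fderiv_apply_eq_sum_pd, Pi.sub_apply, hpd z hz, Finset.sum_const_zero] at hfz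
  exact (sub_eq_zero.1 hfz).symm

/-- The one-form `∑ l ∈ s, a l dx_l` on `ℝ^m`. -/
def coordForm (s : Finset (Fin m)) (a : Fin m → (Fin m → ℝ) → ℝ) (x : Fin m → ℝ) :
    (Fin m → ℝ) →L[ℝ] ℝ :=
  ∑ l ∈ s, a l x • .proj (φ := fun _ ↦ ℝ) l

variable {a : Fin m → (Fin m → ℝ) → ℝ}

theorem fderiv_coordForm_apply {y u : Fin m → ℝ} (ha : ∀ l ∈ s, DifferentiableAt ℝ (a l) y)
    (hu : zeroOn s u = 0) (v : Fin m → ℝ) :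
    fderiv ℝ (coordForm s a) y u v = ∑ l ∈ s, ∑ j ∈ s, u j * pd (a l) j y * v l := by
  have hderiv : HasFDerivAt (coordForm s a) _ y := HasFDerivAt.fun_sum fun l hl ↦
    (ha l hl).hasFDerivAt.smul_const (ContinuousLinearMap.proj (R := ℝ) (φ := fun _ : Fin m ↦ ℝ) l)
  simp only [hderiv.fderiv, sum_apply, smul_apply, ContinuousLinearMap.smulRight_apply,
    ContinuousLinearMap.proj_apply, smul_eq_mul, fderiv_apply_eq_sum_pd, Finset.sum_mul]
  refine Finset.sum_congr rfl fun l _ ↦ (Finset.sum_subset s.subset_univ fun j _ hj ↦ ?_).symm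
  simp [zeroOn_eq_zero_iff.1 hu j hj]

variable (hU : IsCoordinateDomain U)
include hU

theorem IsCoordinateDomain.eq_apply_zeroOn (hf : DifferentiableOn ℝ f U)
    (hpd : ∀ l ∈ s, EqOn (pd f l) 0 U) (hx : x ∈ U) : f x = f (zeroOn s x) := by
  have hsegment : segment ℝ x (zeroOn s x) ⊆ U :=
    hU.convex.segment_subset hx (hU.mapsTo_zeroOn s hx)
  refine eq_of_sub_mul_pd_eq_zero
    (fun z hz ↦ (hf z (hsegment hz)).differentiableAt (hU.isOpen.mem_nhds (hsegment hz)))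
    fun z hz k ↦ ?_
  by_cases hk : k ∈ s
  · simp [hpd k hk (hsegment hz)]
  · simp [zeroOn_apply, hk]

theorem IsCoordinateDomain.eqOn_zero_of_pd (hf : DifferentiableOn ℝ f U)
    (hpd : ∀ l ∈ s, EqOn (pd f l) 0 U) (hf0 : ∀ x ∈ U, (∀ l ∈ s, x l = 0) → f x = 0) :
    EqOn f 0 U := fun x hx ↦ by
  rw [hU.eq_apply_zeroOn hf hpd hx]
  exact hf0 _ (hU.mapsTo_zeroOn s hx) fun l hl ↦ by simp [zeroOn_apply, hl]

theorem IsCoordinateDomain.exists_relative_potential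
    (ha : ∀ l ∈ s, ContDiffOn ℝ ∞ (a l) U)
    (hclosed : ∀ j ∈ s, ∀ l ∈ s, EqOn (pd (a l) j) (pd (a j) l) U) :
    ∃ θ : (Fin m → ℝ) → ℝ, ContDiffOn ℝ ∞ θ U ∧ (∀ x, (∀ l ∈ s, x l = 0) → θ x = 0) ∧
      ∀ l ∈ s, EqOn (pd θ l) (a l) U := by
  have hα : ContDiffOn ℝ ∞ (coordForm s a) U :=
    ContDiffOn.sum fun l hl ↦ (ha l hl).smul contDiffOn_const
  have hfderiv := fun y hy u v hu ↦ fderiv_coordForm_apply (y := y) (u := u) (fun l hl ↦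
    differentiableAt_of_contDiffOn hU.isOpen (ha l hl) hy) hu v
  have hsymm : ∀ y ∈ U, ∀ u v, zeroOn s u = 0 → zeroOn s v = 0 →
      fderiv ℝ (coordForm s a) y u v = fderiv ℝ (coordForm s a) y v u := fun y hy u v hu hv ↦ by
    rw [hfderiv y hy u v hu, hfderiv y hy v u hv, Finset.sum_comm]
    refine Finset.sum_congr rfl fun j hj ↦ Finset.sum_congr rfl fun l hl ↦ ?_
    rw [hclosed j hj l hl hy]
    ring
  refine ⟨relPrimitive (zeroOn s) (coordForm s a),
    fun x hx ↦ (contDiffAt_relPrimitive hU.isOpen hU.convex (hU.mapsTo_zeroOn s) hα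
      hx).contDiffWithinAt,
    fun x hx ↦ relPrimitive_eq_zero (zeroOn_eq_self hx), fun l hl x hx ↦ ?_⟩
  have hsingle : zeroOn s (Pi.single l 1) = 0 :=
    zeroOn_eq_zero_iff.2 fun k hk ↦ Pi.single_eq_of_ne (ne_of_mem_of_not_mem hl hk).symm 1
  rw [pd, fderiv_relPrimitive_apply hU.isOpen hU.convex (hU.mapsTo_zeroOn s) hα hx hsymm
    (zeroOn_zeroOn s) hsingle]
  simp [coordForm, Pi.single_apply, hl]

end CoordinateProjections

section Leaves

variable {m : ℕ} {κ : Type*} {b : Fin m → κ} {U : Set (Fin m → ℝ)} {x : Fin m → ℝ}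

/-- The leaf through `0` carrying the block with label `i`, that is the coordinate subspace `F_i`
of points whose coordinates outside that block vanish. The partition of the coordinates into blocks
is encoded by the function `b` sending a coordinate to the label of its block. -/
def leaf (b : Fin m → κ) (i : κ) : Set (Fin m → ℝ) :=
  {x | ∀ k, b k ≠ i → x k = 0}

theorem zero_mem_leaf (i : κ) : 0 ∈ leaf b i := fun _ _ ↦ rfl

theorem add_smul_single_mem_leaf {k : Fin m} (hx : x ∈ leaf b (b k)) (t : ℝ) :
    x + t • Pi.single k 1 ∈ leaf b (b k) := fun j hj ↦ by
  have hjk : j ≠ k := fun h ↦ hj (congrArg b h)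
  simp [hx j hj, hjk]

theorem convex_leaf (i : κ) : Convex ℝ (leaf b i) := fun x hx y hy s t _ _ _ k hk ↦ by
  simp [hx k hk, hy k hk]

theorem pd_eq_zero_of_eqOn_zero_leaf {f : (Fin m → ℝ) → ℝ} (hU : IsOpen U) {k : Fin m}
    (hf : EqOn f 0 (U ∩ leaf b (b k))) (hx : x ∈ U ∩ leaf b (b k)) : pd f k x = 0 := by
  have hline : ContinuousAt (fun t : ℝ ↦ x + t • Pi.single k (1 : ℝ)) 0 := by fun_prop
  have hmem : ∀ᶠ t : ℝ in 𝓝 0, x + t • Pi.single k 1 ∈ U :=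
    hline.preimage_mem_nhds (hU.mem_nhds (by simpa using hx.1))
  exact pd_eq_zero_of_eqOn_zero hf hx
    (hmem.mono fun t ht ↦ ⟨ht, add_smul_single_mem_leaf hx.2 t⟩)

theorem eqOn_of_eqOn_leaf_of_pd_pd_eq [Nonempty κ] {f₁ f₂ : (Fin m → ℝ) → ℝ}
    (hU : IsCoordinateDomain U) (hf₁ : ContDiffOn ℝ ∞ f₁ U) (hf₂ : ContDiffOn ℝ ∞ f₂ U)
    (hleaf : ∀ i, EqOn f₁ f₂ (U ∩ leaf b i))
    (hpd : ∀ k l, b k ≠ b l → EqOn (pd (pd f₁ k) l) (pd (pd f₂ k) l) U) : EqOn f₁ f₂ U := by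
  classical
  have hu : ContDiffOn ℝ ∞ (f₁ - f₂) U := hf₁.sub hf₂
  have hu_leaf : ∀ i, EqOn (f₁ - f₂) 0 (U ∩ leaf b i) := fun i x hx ↦
    sub_eq_zero.2 (hleaf i hx)
  have hu_pd : ∀ k, EqOn (pd (f₁ - f₂) k) 0 U := fun k ↦ by
    refine hU.eqOn_zero_of_pd (s := {l | b l ≠ b k})
      ((contDiffOn_pd hU.isOpen hu k).differentiableOn (by simp)) (fun l hl x hx ↦ ?_)
      fun x hx hxk ↦ ?_
    · rw [pd_pd_sub hU.isOpen hf₁ hf₂ k l hx]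
      exact sub_eq_zero.2 (hpd k l (by simpa [eq_comm] using hl) hx)
    · exact pd_eq_zero_of_eqOn_zero_leaf hU.isOpen (hu_leaf (b k))
        ⟨hx, fun l hl ↦ hxk l (by simpa using hl)⟩
  have hu_zero := hU.eqOn_zero_of_pd (s := .univ) (hu.differentiableOn (by simp))
    (fun k _ ↦ hu_pd k) fun x hx hx0 ↦
      hu_leaf (Classical.arbitrary κ) ⟨hx, fun k _ ↦ hx0 k (Finset.mem_univ k)⟩
  exact fun x hx ↦ sub_eq_zero.1 (hu_zero hx)

/-- The identities satisfied on `U` by a nonuniformity tensor `∑ A_kl dx_k dx_l`, the sum being over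
pairs of coordinates from different blocks. -/
structure IsNonuniformityTensor (b : Fin m → κ) (A : Fin m → Fin m → (Fin m → ℝ) → ℝ)
    (U : Set (Fin m → ℝ)) : Prop where
  contDiffOn {k l : Fin m} (hkl : b k ≠ b l) : ContDiffOn ℝ ∞ (A k l) U
  symm {k l : Fin m} (hkl : b k ≠ b l) : EqOn (A k l) (A l k) U
  compat {i j k : Fin m} (hik : b i ≠ b k) (hjk : b j ≠ b k) : EqOn (pd (A j k) i) (pd (A i k) j) U

variable {A : Fin m → Fin m → (Fin m → ℝ) → ℝ} (hU : IsCoordinateDomain U)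
  (hA : IsNonuniformityTensor b A U)
include hU hA

theorem IsNonuniformityTensor.exists_transversal_potential (k : Fin m) :
    ∃ θ : (Fin m → ℝ) → ℝ, ContDiffOn ℝ ∞ θ U ∧ EqOn θ 0 (leaf b (b k)) ∧
      ∀ l, b k ≠ b l → EqOn (pd θ l) (A k l) U := by
  classical
  obtain ⟨θ, hθ, hθ_zero, hθ_pd⟩ := hU.exists_relative_potential (s := {l | b k ≠ b l}) (a := A k)
    (fun l hl ↦ hA.contDiffOn (by simpa using hl)) fun j hj l hl x hx ↦ by
      have hkj : b k ≠ b j := by simpa using hj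
      have hkl : b k ≠ b l := by simpa using hl
      rw [pd_congr_of_eqOn hU.isOpen (hA.symm hkl) j hx, hA.compat hkj.symm hkl.symm hx,
        pd_congr_of_eqOn hU.isOpen (hA.symm hkj.symm) l hx]
  exact ⟨θ, hθ, fun x hx ↦ hθ_zero x fun l hl ↦ hx l (by simpa [eq_comm] using hl),
    fun l hl ↦ hθ_pd l (by simpa using hl)⟩

theorem IsNonuniformityTensor.pd_transversal_potential_comm {θ : Fin m → (Fin m → ℝ) → ℝ}
    (hθ : ∀ k, ContDiffOn ℝ ∞ (θ k) U) (hθ_leaf : ∀ k, EqOn (θ k) 0 (leaf b (b k)))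
    (hθ_pd : ∀ k l, b k ≠ b l → EqOn (pd (θ k) l) (A k l) U) (j k : Fin m) :
    EqOn (pd (θ k) j) (pd (θ j) k) U := fun x hx ↦ by
  classical
  by_cases hjk : b j = b k
  swap
  · rw [hθ_pd j k hjk hx, hθ_pd k j (Ne.symm hjk) hx, hA.symm hjk hx]
  have hdiff : ∀ i l, ContDiffOn ℝ ∞ (pd (θ i) l) U := fun i l ↦ contDiffOn_pd hU.isOpen (hθ i) l
  have hzero : EqOn (pd (θ k) j - pd (θ j) k) 0 U := by
    refine hU.eqOn_zero_of_pd (s := {l | b l ≠ b k})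
      (((hdiff k j).sub (hdiff j k)).differentiableOn (by simp)) (fun l hl y hy ↦ ?_)
      fun y hy hyk ↦ ?_
    · have hkl : b k ≠ b l := by simpa [eq_comm] using hl
      have hjl : b j ≠ b l := hjk ▸ hkl
      rw [pd_sub (differentiableAt_of_contDiffOn hU.isOpen (hdiff k j) hy)
        (differentiableAt_of_contDiffOn hU.isOpen (hdiff j k) hy), pd_comm hU.isOpen (hθ k) j l hy,
        pd_comm hU.isOpen (hθ j) k l hy, pd_congr_of_eqOn hU.isOpen (hθ_pd k l hkl) j hy,
        pd_congr_of_eqOn hU.isOpen (hθ_pd j l hjl) k hy, hA.compat hjl hkl hy, sub_self]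
      rfl
    · have hleaf : y ∈ U ∩ leaf b (b k) := ⟨hy, fun l hl ↦ hyk l (by simpa using hl)⟩
      have hθ_zero : ∀ i l, b i = b k → b l = b k → pd (θ i) l y = 0 := fun i l hi hl ↦
        pd_eq_zero_of_eqOn_zero_leaf (b := b) hU.isOpen
          ((hθ_leaf i).mono (by simp [hi, hl])) (by rwa [hl])
      simp [hθ_zero k j rfl hjk, hθ_zero j k hjk rfl]
  exact sub_eq_zero.1 (hzero hx)

theorem IsNonuniformityTensor.exists_potential :
    ∃ Φ : (Fin m → ℝ) → ℝ, ContDiffOn ℝ ∞ Φ U ∧ (∀ i, EqOn Φ 0 (U ∩ leaf b i)) ∧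
      ∀ k l, b k ≠ b l → EqOn (pd (pd Φ k) l) (A k l) U := by
  choose θ hθ hθ_leaf hθ_pd using hA.exists_transversal_potential hU
  obtain ⟨Φ, hΦ, hΦ_zero, hΦ_pd⟩ := hU.exists_relative_potential (s := .univ) (fun k _ ↦ hθ k)
    fun j _ k _ ↦ hA.pd_transversal_potential_comm hU hθ hθ_leaf hθ_pd j k
  refine ⟨Φ, hΦ, fun i x ⟨hxU, hxi⟩ ↦ ?_, fun k l hkl x hx ↦ ?_⟩
  · have h0 : zeroOn .univ x = 0 := zeroOn_eq_zero_iff.2 (by simp)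
    have hsegment : segment ℝ x 0 ⊆ U ∩ leaf b i :=
      (hU.convex.inter (convex_leaf i)).segment_subset ⟨hxU, hxi⟩
        ⟨h0 ▸ hU.mapsTo_zeroOn .univ hxU, zero_mem_leaf i⟩
    rw [eq_of_sub_mul_pd_eq_zero (y := 0)
      (fun z hz ↦ differentiableAt_of_contDiffOn hU.isOpen hΦ (hsegment hz).1) fun z hz k ↦ ?_]
    · exact hΦ_zero 0 fun _ _ ↦ rfl
    obtain ⟨hzU, hzi⟩ := hsegment hz
    rw [hΦ_pd k (Finset.mem_univ k) hzU]
    by_cases hk : b k = i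
    · simp [hθ_leaf k (hk ▸ hzi)]
    · simp [hxi k hk]
  · rw [pd_congr_of_eqOn hU.isOpen (hΦ_pd k (Finset.mem_univ k)) l hx, hθ_pd k l hkl hx]

end Leaves

section Densities

variable {m : ℕ} {κ : Type*} {b : Fin m → κ} {U : Set (Fin m → ℝ)}

theorem exists_separable_extension [Finite κ] {L : κ → (Fin m → ℝ) → ℝ} {c : ℝ} (hU : IsOpen U)
    (hL : ∀ i, ContDiffOn ℝ ∞ (L i) U) (hdep : ∀ i, DependsOn (L i) {k | b k = i})
    (hL0 : ∀ i, L i 0 = c) :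
    ∃ S : (Fin m → ℝ) → ℝ, ContDiffOn ℝ ∞ S U ∧ (∀ i, EqOn S (L i) (leaf b i)) ∧
      ∀ k l, b k ≠ b l → EqOn (pd (pd S k) l) 0 U := by
  have := Fintype.ofFinite κ
  refine ⟨fun x ↦ c + ∑ i, (L i x - c), contDiffOn_const.add
    (ContDiffOn.sum fun i _ ↦ (hL i).sub contDiffOn_const), fun i x hx ↦ ?_, fun k l hkl x hx ↦ ?_⟩
  · have hother : ∀ j ≠ i, L j x = c := fun j hj ↦ by
      rw [← hL0 j]
      exact hdep j fun k hk ↦ hx k (hk.trans_ne hj)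
    dsimp only
    rw [Finset.sum_eq_single i (fun j _ hj ↦ by rw [hother j hj, sub_self]) (by simp)]
    ring
  · have hpd : EqOn (pd (fun x ↦ c + ∑ i, (L i x - c)) k) (pd (L (b k)) k) U := fun y hy ↦ by
      have hsum := HasFDerivAt.const_add c <| HasFDerivAt.fun_sum (u := .univ) fun i _ ↦
        (differentiableAt_of_contDiffOn hU (hL i) hy).hasFDerivAt.sub_const c
      rw [pd, hsum.fderiv, sum_apply]
      exact Finset.sum_eq_single (b k)
        (fun i _ hi ↦ pd_eq_zero_of_dependsOn (hdep i) (Ne.symm hi)) (by simp)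
    have hzero : EqOn (pd (L (b k)) l) 0 U := fun y _ ↦
      pd_eq_zero_of_dependsOn (hdep (b k)) (Ne.symm hkl)
    rw [pd_congr_of_eqOn hU hpd l hx, pd_comm hU (hL (b k)) k l hx, pd_congr_of_eqOn hU hzero k hx]
    simp [pd]

theorem IsNonuniformityTensor.exists_density [Finite κ] {A : Fin m → Fin m → (Fin m → ℝ) → ℝ}
    {H : κ → (Fin m → ℝ) → ℝ} {c : ℝ} (hA : IsNonuniformityTensor b A U)
    (hU : IsCoordinateDomain U) (hH : ∀ i, ContDiffOn ℝ ∞ (H i) U) (hpos : ∀ i, ∀ x ∈ U, 0 < H i x)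
    (hdep : ∀ i, DependsOn (H i) {k | b k = i}) (hH0 : ∀ i, H i 0 = c) :
    ∃ h : (Fin m → ℝ) → ℝ, ContDiffOn ℝ ∞ h U ∧ (∀ x ∈ U, 0 < h x) ∧
      (∀ i, EqOn h (H i) (U ∩ leaf b i)) ∧ ∀ k l, b k ≠ b l → EqOn (logpd2 h k l) (A k l) U := by
  obtain ⟨S, hS, hS_leaf, hS_pd⟩ := exists_separable_extension (b := b)
    (L := fun i x ↦ Real.log (H i x)) (c := Real.log c) hU.isOpen
    (fun i ↦ (hH i).log fun x hx ↦ (hpos i x hx).ne')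
    (fun i _ _ hxy ↦ congrArg Real.log (hdep i hxy)) fun i ↦ by rw [hH0]
  obtain ⟨Φ, hΦ, hΦ_leaf, hΦ_pd⟩ := hA.exists_potential hU
  refine ⟨fun x ↦ Real.exp ((S + Φ) x), (hS.add hΦ).exp, fun x _ ↦ Real.exp_pos _,
    fun i x hx ↦ ?_, fun k l hkl x hx ↦ ?_⟩
  · simp [hS_leaf i hx.2, hΦ_leaf i hx, Real.exp_log (hpos i x hx.1)]
  · have hlog : logpd2 (fun x ↦ Real.exp ((S + Φ) x)) k l x = pd (pd (S + Φ) k) l x := by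
      simp only [logpd2, Real.log_exp]
      rfl
    rw [hlog, pd_pd_add hU.isOpen hS hΦ k l hx, hS_pd k l hkl hx, hΦ_pd k l hkl hx]
    simp

theorem eventuallyEq_of_eqOn_leaf_of_logpd2_eq [Nonempty κ] {h₁ h₂ : (Fin m → ℝ) → ℝ}
    (hU : U ∈ 𝓝 0) (hh₁ : ContDiffOn ℝ ∞ h₁ U) (hh₂ : ContDiffOn ℝ ∞ h₂ U)
    (hpos₁ : ∀ x ∈ U, 0 < h₁ x) (hpos₂ : ∀ x ∈ U, 0 < h₂ x)
    (hleaf : ∀ i, EqOn h₁ h₂ (U ∩ leaf b i))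
    (hlog : ∀ k l, b k ≠ b l → EqOn (logpd2 h₁ k l) (logpd2 h₂ k l) U) : h₁ =ᶠ[𝓝 0] h₂ := by
  obtain ⟨r, hr, hrU⟩ := Metric.mem_nhds_iff.1 hU
  have hlog_eq := eqOn_of_eqOn_leaf_of_pd_pd_eq (isCoordinateDomain_ball m r)
    ((hh₁.log fun x hx ↦ (hpos₁ x hx).ne').mono hrU)
    ((hh₂.log fun x hx ↦ (hpos₂ x hx).ne').mono hrU)
    (fun i x hx ↦ congrArg Real.log (hleaf i ⟨hrU hx.1, hx.2⟩))
    fun k l hkl ↦ (hlog k l hkl).mono hrU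
  filter_upwards [ball_mem_nhds 0 hr] with x hx
  exact Real.log_injOn_pos (hpos₁ x (hrU hx)) (hpos₂ x (hrU hx)) (hlog_eq hx)

end Densities

section Blocks

variable {m n : ℕ} {B : Fin n → Finset (Fin m)}

theorem exists_block_label (hBdisj : ∀ i j, i ≠ j → Disjoint (B i) (B j))
    (hBcover : ∀ k, ∃ i, k ∈ B i) : ∃ b : Fin m → Fin n, ∀ k i, k ∈ B i ↔ b k = i := by
  choose b hb using hBcover
  refine ⟨b, fun k i ↦ ⟨fun hk ↦ ?_, fun hk ↦ hk ▸ hb k⟩⟩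
  by_contra hne
  exact Finset.disjoint_left.1 (hBdisj _ _ hne) (hb k) hk

theorem exists_ball_subset_and_mapsTo_restrict {V : Set (Fin m → ℝ)} (hV : V ∈ 𝓝 0)
    {W : ∀ i, Set (B i → ℝ)} (hW : ∀ i, W i ∈ 𝓝 0) :
    ∃ r > 0, ball 0 r ⊆ V ∧ ∀ i, MapsTo (B i).restrict (ball (0 : Fin m → ℝ) r) (W i) := by
  have hrestrict : ∀ i, (B i).restrict ⁻¹' W i ∈ 𝓝 (0 : Fin m → ℝ) := fun i ↦
    ((Finset.continuous_restrict (B i)).continuousAt).preimage_mem_nhds (hW i)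
  obtain ⟨r, hr, hball⟩ := Metric.mem_nhds_iff.1
    (Filter.inter_mem hV (Filter.iInter_mem.2 hrestrict))
  exact ⟨r, hr, fun x hx ↦ (hball hx).1, fun i x hx ↦ mem_iInter.1 (hball hx).2 i⟩

theorem contDiffOn_comp_restrict {s : Finset (Fin m)} {g : (s → ℝ) → ℝ} {W : Set (s → ℝ)}
    {U : Set (Fin m → ℝ)} (hg : ContDiffOn ℝ ∞ g W) (hUW : MapsTo s.restrict U W) :
    ContDiffOn ℝ ∞ (fun x ↦ g (s.restrict x)) U :=
  hg.comp (contDiff_pi.2 fun k : s ↦ contDiff_apply ℝ ℝ k.1).contDiffOn hUW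

end Blocks

/-- Given prescribed smooth positive boundary data `g i` along the
coordinate subspaces `F_i` (agreeing at `0`) and a prescribed nonuniformity tensor
`A` (symmetric, cross-block, compatible), there is a unique germ of a smooth positive
density `h` with these restrictions and `∂²(log h)/∂x_k∂x_l = A_{kl}` for all cross-block
pairs. -/
theorem stmt7 {m n : ℕ} (hm : 2 ≤ m) (hn : 2 ≤ n)
    (B : Fin n → Finset (Fin m))
    (hBne : ∀ i, (B i).Nonempty)
    (hBdisj : ∀ i j, i ≠ j → Disjoint (B i) (B j))
    (hBcover : ∀ k, ∃ i, k ∈ B i)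
    (g : ∀ i : Fin n, (↥(B i) → ℝ) → ℝ)
    (W : ∀ i : Fin n, Set (↥(B i) → ℝ))
    (hWopen : ∀ i, IsOpen (W i)) (hW0 : ∀ i, (0 : ↥(B i) → ℝ) ∈ W i)
    (hgsm : ∀ i, ContDiffOn ℝ (⊤ : ℕ∞) (g i) (W i))
    (hgpos : ∀ i, ∀ y ∈ W i, 0 < g i y)
    (hg0 : ∀ i j : Fin n, g i 0 = g j 0)
    (A : Fin m → Fin m → (Fin m → ℝ) → ℝ)
    (VA : Set (Fin m → ℝ)) (hVA : IsOpen VA) (h0VA : (0 : Fin m → ℝ) ∈ VA)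
    (hAsm : ∀ k l : Fin m, (¬ ∃ s : Fin n, k ∈ B s ∧ l ∈ B s) →
      ContDiffOn ℝ (⊤ : ℕ∞) (A k l) VA)
    (hAsymm : ∀ k l : Fin m, (¬ ∃ s : Fin n, k ∈ B s ∧ l ∈ B s) →
      ∀ x ∈ VA, A k l x = A l k x)
    (hAcompat : ∀ a b c : Fin m,
      (¬ ∃ s : Fin n, a ∈ B s ∧ c ∈ B s) → (¬ ∃ s : Fin n, b ∈ B s ∧ c ∈ B s) →
      ∀ x ∈ VA, pd (A b c) a x = pd (A a c) b x) :
    ∃ (U : Set (Fin m → ℝ)) (h : (Fin m → ℝ) → ℝ),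
      IsOpen U ∧ (0 : Fin m → ℝ) ∈ U ∧
      ContDiffOn ℝ (⊤ : ℕ∞) h U ∧ (∀ x ∈ U, 0 < h x) ∧
      (∀ i : Fin n, ∀ x ∈ U, (∀ k, k ∉ B i → x k = 0) →
        h x = g i (fun k : ↥(B i) => x k.1)) ∧
      (∀ k l : Fin m, (¬ ∃ s : Fin n, k ∈ B s ∧ l ∈ B s) →
        ∀ x ∈ U, logpd2 h k l x = A k l x) ∧
      (∀ (U' : Set (Fin m → ℝ)) (h' : (Fin m → ℝ) → ℝ),
        IsOpen U' → (0 : Fin m → ℝ) ∈ U' →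
        ContDiffOn ℝ (⊤ : ℕ∞) h' U' → (∀ x ∈ U', 0 < h' x) →
        (∀ i : Fin n, ∀ x ∈ U', (∀ k, k ∉ B i → x k = 0) →
          h' x = g i (fun k : ↥(B i) => x k.1)) →
        (∀ k l : Fin m, (¬ ∃ s : Fin n, k ∈ B s ∧ l ∈ B s) →
          ∀ x ∈ U', logpd2 h' k l x = A k l x) →
        ∃ U'' : Set (Fin m → ℝ), IsOpen U'' ∧ (0 : Fin m → ℝ) ∈ U'' ∧
          ∀ x ∈ U'', h x = h' x) := by
  obtain ⟨b, hb⟩ := exists_block_label hBdisj hBcover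
  have hcross : ∀ {k l}, b k ≠ b l ↔ ¬ ∃ s, k ∈ B s ∧ l ∈ B s := by simp [hb, eq_comm]
  have hleaf : ∀ {i x}, x ∈ leaf b i ↔ ∀ k, k ∉ B i → x k = 0 := by simp [leaf, hb]
  obtain ⟨r, hr, hrVA, hrW⟩ := exists_ball_subset_and_mapsTo_restrict (hVA.mem_nhds h0VA)
    fun i ↦ (hWopen i).mem_nhds (hW0 i)
  have hA : IsNonuniformityTensor b A (ball 0 r) :=
    { contDiffOn hkl := (hAsm _ _ (hcross.1 hkl)).mono hrVA
      symm hkl x hx := hAsymm _ _ (hcross.1 hkl) x (hrVA hx)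
      compat hik hjk x hx := hAcompat _ _ _ (hcross.1 hik) (hcross.1 hjk) x (hrVA hx) }
  have : NeZero n := ⟨by lia⟩
  obtain ⟨h, hh, hpos, hhg, hhA⟩ := hA.exists_density (c := g 0 0) (isCoordinateDomain_ball m r)
    (fun i ↦ contDiffOn_comp_restrict (hgsm i) (hrW i)) (fun i x hx ↦ hgpos i _ (hrW i hx))
    (fun i x y hxy ↦ congrArg (g i) (funext fun k ↦ hxy k ((hb k i).1 k.2))) fun i ↦ hg0 i 0
  refine ⟨ball 0 r, h, isOpen_ball, mem_ball_self hr, hh, hpos,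
    fun i x hx hxi ↦ hhg i ⟨hx, hleaf.2 hxi⟩, fun k l hkl ↦ hhA k l (hcross.2 hkl),
    fun U' h' hU' h0U' hh' hpos' hh'g hh'A ↦ ?_⟩
  obtain ⟨ρ, hρ, hρ_eq⟩ := eventually_nhds_iff_ball.1 <|
    eventuallyEq_of_eqOn_leaf_of_logpd2_eq (b := b)
      (Filter.inter_mem (ball_mem_nhds 0 hr) (hU'.mem_nhds h0U')) (hh.mono inter_subset_left)
      (hh'.mono inter_subset_right) (fun x hx ↦ hpos x hx.1) (fun x hx ↦ hpos' x hx.2)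
      (fun i x hx ↦ (hhg i ⟨hx.1.1, hx.2⟩).trans (hh'g i x hx.1.2 (hleaf.1 hx.2)).symm)
      fun k l hkl x hx ↦ (hhA k l hkl hx.1).trans (hh'A k l (hcross.1 hkl) x hx.2).symm
  exact ⟨ball 0 ρ, isOpen_ball, mem_ball_self hρ, hρ_eq⟩
end
end

section
/- Let m ≥ 2 and let B_1,…,B_n (n ≥ 2) be a partition of {1,…,m} into nonempty blocks, and for each i let F_i = {x ∈ ℝ^m : x_k = 0 for all k ∉ B_i}. Let h be a smooth positive function on a neighborhood of 0 in ℝ^m. Then there exist a neighborhood U of 0 and a smooth diffeomorphism ψ from U onto an open subset of ℝ^m, of block-product form ψ(y) = (ψ_1(y_{B_1}),…,ψ_n(y_{B_n})) with ψ(0) = 0, such that the transformed density ĥ(y) := h(ψ(y))·∏_{i=1}^n |det Dψ_i(y_{B_i})| equals 1 at every point y ∈ U lying in F_1 ∪ … ∪ F_n. -/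
open MeasureTheory

noncomputable section

/-- Determinant of the Jacobian of the block map `ψ_i`. -/
def blockDet {m n : ℕ} (B : Fin n → Finset (Fin m)) (ψ : (Fin m → ℝ) → (Fin m → ℝ))
    (i : Fin n) (x : Fin m → ℝ) : ℝ :=
  Matrix.det (Matrix.of fun a k : ↥(B i) =>
    fderiv ℝ (fun z => ψ z a.1) x (Pi.single k.1 (1:ℝ)))

/-!
A density `g` on `ℝ^S` with `g 0 ≠ 0` is the Jacobian determinant of the shear which replaces a
single coordinate `x_k` by the primitive `∫ u in 0..x_k, g (x_1, …, u, …)`; the local inverse `ψ` of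
this shear turns `g` into the unit density. Apply this in each of the `n` blocks to the restriction
`g_i` of `h` to `F_i`, scaled so that `g_i 0 = (h 0)^(1/n)`, and let `ψ` be the product of the
resulting maps. On `F_i` all blocks but the `i`-th sit at the origin, so the product of the `g_j`
equals `h` there, and since `ψ` preserves `F_i` this is all that is needed.
-/

open scoped Topology

section ParametricIntegral

variable {E F : Type*} [NormedAddCommGroup E] [NormedSpace ℝ E]
  [NormedAddCommGroup F] [NormedSpace ℝ F]

lemma hasFDerivAt_intervalIntegral_of_contDiff [ProperSpace E] {f : E × ℝ → F}
    (hf : ContDiff ℝ 1 f) (a b : ℝ) (x : E) :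
    HasFDerivAt (fun x => ∫ t in a..b, f (x, t))
      (∫ t in a..b, fderiv ℝ f (x, t) ∘L .inl ℝ E ℝ) x := by
  have hf' : Continuous fun p : E × ℝ => fderiv ℝ f p ∘L .inl ℝ E ℝ :=
    (hf.continuous_fderiv one_ne_zero).clm_comp continuous_const
  have hslice (y : E) : Continuous fun t : ℝ => (y, t) := by fun_prop
  obtain ⟨C, hC⟩ := ((isCompact_closedBall x 1).prod (isCompact_uIcc (a := a) (b := b))
    ).exists_bound_of_continuousOn hf'.continuousOn
  refine intervalIntegral.hasFDerivAt_integral_of_dominated_of_fderiv_le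
    (F' := fun x t => fderiv ℝ f (x, t) ∘L .inl ℝ E ℝ) (bound := fun _ => C)
    (Metric.closedBall_mem_nhds x one_pos)
    (.of_forall fun y => (hf.continuous.comp (hslice y)).aestronglyMeasurable)
    ((hf.continuous.comp (hslice x)).intervalIntegrable _ _)
    (hf'.comp (hslice x)).aestronglyMeasurable
    (.of_forall fun t ht y hy => hC (y, t) ⟨hy, Set.uIoc_subset_uIcc ht⟩)
    intervalIntegrable_const (.of_forall fun t _ y _ => ?_)
  exact (hf.differentiable one_ne_zero (y, t)).hasFDerivAt.comp y (hasFDerivAt_prodMk_left y t)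

lemma contDiff_nat_intervalIntegral [FiniteDimensional ℝ E] (n : ℕ) {f : E × ℝ → F}
    (hf : ContDiff ℝ n f) (a b : ℝ) : ContDiff ℝ n fun x => ∫ t in a..b, f (x, t) := by
  induction n generalizing f with
  | zero =>
    exact contDiff_zero.2 <| intervalIntegral.continuous_parametric_intervalIntegral_of_continuous'
      (f := fun x t => f (x, t)) hf.continuous a b
  | succ n ih =>
    have hderiv := hasFDerivAt_intervalIntegral_of_contDiff (hf.of_le (by norm_cast; omega)) a b
    push_cast at hf ⊢
    have hf' : ContDiff ℝ n fun p : E × ℝ => fderiv ℝ f p ∘L .inl ℝ E ℝ :=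
      (hf.fderiv_right le_rfl).clm_comp contDiff_const
    refine contDiff_succ_iff_fderiv_apply.2
      ⟨fun x => (hderiv x).differentiableAt, by simp, fun v => ?_⟩
    have hint (x : E) : IntervalIntegrable
        (fun t => fderiv ℝ f (x, t) ∘L .inl ℝ E ℝ) volume a b :=
      (hf'.continuous.comp (by fun_prop : Continuous fun t : ℝ => (x, t))).intervalIntegrable _ _
    simp only [(hderiv _).fderiv, ContinuousLinearMap.intervalIntegral_apply (hint _)]
    exact ih (hf'.clm_apply contDiff_const)

lemma contDiff_intervalIntegral [FiniteDimensional ℝ E] {n : ℕ∞} {f : E × ℝ → F}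
    (hf : ContDiff ℝ n f) (a b : ℝ) : ContDiff ℝ n fun x => ∫ t in a..b, f (x, t) :=
  contDiff_iff_forall_nat_le.2 fun k hk =>
    contDiff_nat_intervalIntegral k (hf.of_le (mod_cast hk)) a b

end ParametricIntegral

section LocalExtension

variable {E F : Type*} [NormedAddCommGroup E] [NormedSpace ℝ E] [HasContDiffBump E]
  [NormedAddCommGroup F] [NormedSpace ℝ F]

lemma exists_contDiff_eventuallyEq {n : ℕ∞} {f : E → F} {V : Set E} {x : E}
    (hV : IsOpen V) (hx : x ∈ V) (hf : ContDiffOn ℝ n f V) :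
    ∃ g : E → F, ContDiff ℝ n g ∧ g =ᶠ[𝓝 x] f := by
  obtain ⟨ε, hε, hεV⟩ := Metric.nhds_basis_closedBall.mem_iff.1 (hV.mem_nhds hx)
  let χ : ContDiffBump x := ⟨ε / 2, ε, half_pos hε, half_lt_self hε⟩
  refine ⟨fun y => χ y • f y, contDiff_iff_contDiffAt.2 fun y => ?_, ?_⟩
  · by_cases hy : y ∈ V
    · exact χ.contDiffAt.smul (hf.contDiffAt (hV.mem_nhds hy))
    · have hyχ : y ∉ tsupport χ := fun h => hy (hεV (χ.tsupport_eq ▸ h))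
      refine (contDiffAt_const (c := (0 : F))).congr_of_eventuallyEq ?_
      filter_upwards [notMem_tsupport_iff_eventuallyEq.1 hyχ] with z hz
      rw [hz, Pi.zero_apply, zero_smul]
  · filter_upwards [χ.eventuallyEq_one] with y hy
    rw [hy, Pi.one_apply, one_smul]

end LocalExtension

section CoordinateShear

variable {ι : Type*} [DecidableEq ι]

lemma det_one_updateRow [Fintype ι] {R : Type*} [CommRing R] (k : ι) (v : ι → R) :
    ((1 : Matrix ι ι R).updateRow k v).det = v k := by
  rw [← Matrix.cramer_transpose_apply, Matrix.transpose_one, Matrix.cramer_one,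
    Module.End.one_apply]

lemma det_fderiv_update [Finite ι] {p : (ι → ℝ) → ℝ} {x : ι → ℝ}
    (hp : DifferentiableAt ℝ p x) (k : ι) :
    (fderiv ℝ (fun y => Function.update y k (p y)) x).det = fderiv ℝ p x (Pi.single k 1) := by
  cases nonempty_fintype ι
  have hderiv : HasFDerivAt (fun y => Function.update y k (p y))
      (ContinuousLinearMap.pi (Function.update (fun a => .proj a) k (fderiv ℝ p x))) x := by
    refine hasFDerivAt_pi.2 fun a => ?_
    obtain rfl | ha := eq_or_ne a k
    · simpa using hp.hasFDerivAt
    · simpa [ha] using hasFDerivAt_apply a x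
  rw [hderiv.fderiv, ContinuousLinearMap.det, ← LinearMap.det_toMatrix',
    ← det_one_updateRow k fun b => fderiv ℝ p x (Pi.single b 1)]
  congr 1
  ext a b
  obtain rfl | ha := eq_or_ne a k
  · simp [LinearMap.toMatrix'_apply]
  · simp [LinearMap.toMatrix'_apply, ha, Matrix.one_apply, Pi.single_apply]

/-- The primitive of `g` in the `k`-th coordinate that vanishes on the hyperplane `x k = 0`. -/
def coordPrimitive (g : (ι → ℝ) → ℝ) (k : ι) (x : ι → ℝ) : ℝ :=
  ∫ u in 0..x k, g (Function.update x k u)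

lemma coordPrimitive_eq_mul_integral (g : (ι → ℝ) → ℝ) (k : ι) (x : ι → ℝ) :
    coordPrimitive g k x = x k * ∫ t in (0 : ℝ)..1, g (Function.update x k (x k * t)) := by
  simpa [coordPrimitive] using (intervalIntegral.mul_integral_comp_mul_left (a := 0) (b := 1)
    (f := fun u => g (Function.update x k u)) (x k)).symm

variable [Fintype ι]

lemma contDiff_coordPrimitive {n : ℕ∞} {g : (ι → ℝ) → ℝ} (hg : ContDiff ℝ n g) (k : ι) :
    ContDiff ℝ n (coordPrimitive g k) := by
  have hupdate : ContDiff ℝ n fun p : (ι → ℝ) × ℝ =>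
      Function.update p.1 k (p.1 k * p.2) := by
    refine contDiff_pi.2 fun a => ?_
    simp only [Function.update_apply]
    split_ifs <;> fun_prop
  simp only [funext (coordPrimitive_eq_mul_integral g k)]
  exact (contDiff_apply ℝ ℝ k).mul (contDiff_intervalIntegral (hg.comp hupdate) 0 1)

lemma fderiv_coordPrimitive_single {n : ℕ∞} (hn : n ≠ 0) {g : (ι → ℝ) → ℝ}
    (hg : ContDiff ℝ n g) (k : ι) (x : ι → ℝ) :
    fderiv ℝ (coordPrimitive g k) x (Pi.single k 1) = g x := by
  have hchain : HasDerivAt (fun s => coordPrimitive g k (Function.update x k s))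
      (fderiv ℝ (coordPrimitive g k) x (Pi.single k 1)) (x k) := by
    refine HasFDerivAt.comp_hasDerivAt (l := coordPrimitive g k) (x k) ?_
      (hasDerivAt_update x k (x k))
    rw [Function.update_eq_self]
    exact ((contDiff_coordPrimitive hg k).differentiable (mod_cast hn) x).hasFDerivAt
  have hftc : HasDerivAt (fun s => ∫ u in 0..s, g (Function.update x k u)) (g x) (x k) := by
    have hcont : Continuous fun u => g (Function.update x k u) :=
      hg.continuous.comp (continuous_const.update k continuous_id)
    simpa using hcont.integral_hasStrictDerivAt 0 (x k) |>.hasDerivAt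
  simp only [coordPrimitive, Function.update_self, Function.update_idem] at hchain
  exact hchain.unique hftc

end CoordinateShear

section UnitDensityCoordinates

lemma exists_openPartialHomeomorph_of_det_fderiv_ne_zero {E : Type*} [NormedAddCommGroup E]
    [NormedSpace ℝ E] [FiniteDimensional ℝ E] {n : ℕ∞} (hn : n ≠ 0) {φ : E → E}
    (hφ : ContDiff ℝ n φ) {W : Set E} {a : E} (hW : W ∈ 𝓝 a)
    (hdet : ∀ x ∈ W, (fderiv ℝ φ x).det ≠ 0) :
    ∃ e : OpenPartialHomeomorph E E, ⇑e = φ ∧ a ∈ e.source ∧ e.source ⊆ W ∧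
      ContDiffOn ℝ n e.symm e.target ∧
      ∀ y ∈ e.target, (fderiv ℝ e.symm y).det = ((fderiv ℝ φ (e.symm y)).det)⁻¹ := by
  have hderiv {x : E} (hx : x ∈ W) : HasFDerivAt φ
      ((fderiv ℝ φ x).toContinuousLinearEquivOfDetNeZero (hdet x hx) : E →L[ℝ] E) x :=
    (hφ.differentiable (mod_cast hn) x).hasFDerivAt
  have : CompleteSpace E := FiniteDimensional.complete ℝ E
  let e₀ := hφ.contDiffAt.toOpenPartialHomeomorph φ (hderiv (mem_of_mem_nhds hW)) (mod_cast hn)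
  let e := e₀.restr W
  have he_source : e.source ⊆ W := fun x hx => interior_subset (e₀.restr_source W ▸ hx).2
  have hsymm {y : E} (hy : y ∈ e.target) := hderiv (he_source (e.map_target hy))
  refine ⟨e, rfl, ?_, he_source, fun y hy => ?_, fun y hy => ?_⟩
  · rw [e₀.restr_source]
    exact ⟨hφ.contDiffAt.mem_toOpenPartialHomeomorph_source _ _, mem_interior_iff_mem_nhds.2 hW⟩
  · exact (e.contDiffAt_symm hy (hsymm hy) hφ.contDiffAt).contDiffWithinAt
  · rw [(e.hasFDerivAt_symm hy (hsymm hy)).fderiv, ContinuousLinearEquiv.det_coe_symm,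
      ContinuousLinearMap.coe_toContinuousLinearEquivOfDetNeZero]

variable {ι : Type*} [Fintype ι]

theorem exists_openPartialHomeomorph_mul_det_fderiv_eq_one [Nonempty ι] {n : ℕ∞} (hn : n ≠ 0)
    {g : (ι → ℝ) → ℝ} {V : Set (ι → ℝ)} (hV : IsOpen V) (h0V : 0 ∈ V)
    (hg : ContDiffOn ℝ n g V) (hg0 : g 0 ≠ 0) :
    ∃ ψ : OpenPartialHomeomorph (ι → ℝ) (ι → ℝ), 0 ∈ ψ.source ∧ ψ 0 = 0 ∧
      ContDiffOn ℝ n ψ ψ.source ∧ ∀ y ∈ ψ.source, g (ψ y) * (fderiv ℝ ψ y).det = 1 := by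
  classical
  obtain ⟨k⟩ := ‹Nonempty ι›
  obtain ⟨G, hG, hGg⟩ := exists_contDiff_eventuallyEq hV h0V hg
  let φ : (ι → ℝ) → ι → ℝ := fun x => Function.update x k (coordPrimitive G k x)
  have hφ : ContDiff ℝ n φ := by
    refine contDiff_pi.2 fun a => ?_
    simp only [φ, Function.update_apply]
    split_ifs
    exacts [contDiff_coordPrimitive hG k, contDiff_apply ℝ ℝ a]
  have hφ0 : φ 0 = 0 := by simp [φ, coordPrimitive]
  have hdet (x : ι → ℝ) : (fderiv ℝ φ x).det = G x := by
    rw [det_fderiv_update ((contDiff_coordPrimitive hG k).differentiable (mod_cast hn) x),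
      fderiv_coordPrimitive_single hn hG]
  have hW : {x | G x = g x ∧ G x ≠ 0} ∈ 𝓝 0 :=
    hGg.and (hG.continuous.continuousAt.eventually_ne (hGg.self_of_nhds ▸ hg0))
  obtain ⟨e, heφ, h0e, heW, hsmooth, hdet_symm⟩ :=
    exists_openPartialHomeomorph_of_det_fderiv_ne_zero hn hφ hW fun x hx => hdet x ▸ hx.2
  have he0 : e 0 = 0 := heφ ▸ hφ0
  refine ⟨e.symm, by simpa [he0] using e.map_source h0e, by simpa [he0] using e.left_inv h0e,
    hsmooth, fun y hy => ?_⟩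
  obtain ⟨hGg_y, hG_y⟩ := heW (e.map_target hy)
  rw [hdet_symm y hy, hdet, ← hGg_y, mul_inv_cancel₀ hG_y]

end UnitDensityCoordinates

section Blocks

variable {ι : Type*}

/-- The coordinates `x_S` of `x` in the block `S`. -/
def blockRestrict (S : Finset ι) : (ι → ℝ) →L[ℝ] (S → ℝ) :=
  Pi.compRightL ℝ (fun _ => ℝ) Subtype.val

/-- The inclusion of `ℝ^S` as the coordinate subspace `{x | x k = 0 for k ∉ S}`. -/
def blockExtend (S : Finset ι) : (S → ℝ) →L[ℝ] (ι → ℝ) :=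
  LinearMap.toContinuousLinearMap (Function.ExtendByZero.linearMap ℝ Subtype.val)

@[simp]
lemma blockRestrict_apply (S : Finset ι) (x : ι → ℝ) (k : S) : blockRestrict S x k = x k := rfl

lemma blockExtend_blockRestrict {S : Finset ι} {x : ι → ℝ} (hx : ∀ k ∉ S, x k = 0) :
    blockExtend S (blockRestrict S x) = x := by
  ext k
  by_cases hk : k ∈ S
  · exact Subtype.val_injective.extend_apply (blockRestrict S x) 0 ⟨k, hk⟩
  · rw [hx k hk]
    exact Function.extend_apply' _ _ _ (by simpa using hk)

lemma blockRestrict_eq_zero_of_disjoint {S T : Finset ι} (hST : Disjoint S T) {x : ι → ℝ}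
    (hx : ∀ k ∉ S, x k = 0) : blockRestrict T x = 0 :=
  funext fun k => hx k (Finset.disjoint_right.1 hST k.2)

/-- The density `h` restricted to the coordinate subspace of the block `S`, scaled by the constant
for which `N` blocks together contribute the factor `h 0` at the origin. -/
def blockDensity (h : (ι → ℝ) → ℝ) (N : ℕ) (S : Finset ι) (z : S → ℝ) : ℝ :=
  h 0 ^ (N : ℝ)⁻¹ * (h (blockExtend S z) / h 0)

lemma contDiffOn_blockDensity [Fintype ι] {n : ℕ∞} {h : (ι → ℝ) → ℝ} {V : Set (ι → ℝ)}
    (hh : ContDiffOn ℝ n h V) (N : ℕ) (S : Finset ι) :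
    ContDiffOn ℝ n (blockDensity h N S) (blockExtend S ⁻¹' V) :=
  contDiffOn_const.mul
    ((hh.comp (blockExtend S).contDiff.contDiffOn (Set.mapsTo_preimage _ _)).div_const _)

lemma blockDensity_zero {h : (ι → ℝ) → ℝ} (h0 : h 0 ≠ 0) (N : ℕ) (S : Finset ι) :
    blockDensity h N S 0 = h 0 ^ (N : ℝ)⁻¹ := by
  rw [blockDensity, map_zero, div_self h0, mul_one]

lemma exists_openPartialHomeomorph_blockDensity_mul_det_fderiv_eq_one [Fintype ι] {n : ℕ∞}
    (hn : n ≠ 0) {h : (ι → ℝ) → ℝ} {V : Set (ι → ℝ)} (hV : IsOpen V) (h0V : 0 ∈ V)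
    (hh : ContDiffOn ℝ n h V) (h0 : 0 < h 0) (N : ℕ) {S : Finset ι} (hS : S.Nonempty) :
    ∃ f : OpenPartialHomeomorph (S → ℝ) (S → ℝ), 0 ∈ f.source ∧ f 0 = 0 ∧
      ContDiffOn ℝ n f f.source ∧
      ∀ z ∈ f.source, blockDensity h N S (f z) * (fderiv ℝ f z).det = 1 := by
  have := hS.to_subtype
  refine exists_openPartialHomeomorph_mul_det_fderiv_eq_one hn
    (hV.preimage (blockExtend S).continuous) (by simpa using h0V)
    (contDiffOn_blockDensity hh N S) ?_
  rw [blockDensity_zero h0.ne']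
  positivity

variable {κ : Type*} {B : κ → Finset ι}

lemma prod_blockDensity_blockRestrict [Fintype κ] (hB : Pairwise fun i j => Disjoint (B i) (B j))
    {h : (ι → ℝ) → ℝ} (h0 : 0 < h 0) {i : κ} {x : ι → ℝ} (hx : ∀ k ∉ B i, x k = 0) :
    ∏ j, blockDensity h (Fintype.card κ) (B j) (blockRestrict (B j) x) = h x := by
  have hcard : Fintype.card κ ≠ 0 := have : Nonempty κ := ⟨i⟩; Fintype.card_ne_zero
  have hother (j : κ) (hji : j ≠ i) : h (blockExtend (B j) (blockRestrict (B j) x)) / h 0 = 1 := by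
    rw [blockRestrict_eq_zero_of_disjoint (hB hji.symm) hx, map_zero, div_self h0.ne']
  calc ∏ j, blockDensity h (Fintype.card κ) (B j) (blockRestrict (B j) x)
      = (h 0 ^ (Fintype.card κ : ℝ)⁻¹) ^ Fintype.card κ
          * ∏ j, h (blockExtend (B j) (blockRestrict (B j) x)) / h 0 := by
        simp only [blockDensity, Finset.prod_mul_distrib, Finset.prod_const, Finset.card_univ]
    _ = h 0 * (h x / h 0) := by
        rw [Real.rpow_inv_natCast_pow h0.le hcard, Fintype.prod_eq_single i hother,
          blockExtend_blockRestrict hx]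
    _ = h x := mul_div_cancel₀ _ h0.ne'

lemma exists_semiconj_blockRestrict (hB : Pairwise fun i j => Disjoint (B i) (B j))
    (hcover : ∀ k, ∃ i, k ∈ B i) (f : ∀ i, (B i → ℝ) → B i → ℝ) :
    ∃ ψ : (ι → ℝ) → ι → ℝ, ∀ i, Function.Semiconj (blockRestrict (B i)) ψ (f i) := by
  choose β hβ using hcover
  refine ⟨fun y a => f (β a) (blockRestrict (B (β a)) y) ⟨a, hβ a⟩, fun i y => ?_⟩
  ext ⟨a, ha⟩
  obtain rfl : β a = i := by
    by_contra hne
    exact Finset.disjoint_left.1 (hB hne) (hβ a) ha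
  rfl

lemma eq_of_blockRestrict_eq (hcover : ∀ k, ∃ i, k ∈ B i) {x y : ι → ℝ}
    (h : ∀ i, blockRestrict (B i) x = blockRestrict (B i) y) : x = y := by
  ext k
  obtain ⟨i, hk⟩ := hcover k
  exact congrFun (h i) ⟨k, hk⟩

lemma isOpen_setOf_forall_blockRestrict_mem [Finite κ] {s : ∀ i, Set (B i → ℝ)}
    (hs : ∀ i, IsOpen (s i)) : IsOpen {y : ι → ℝ | ∀ i, blockRestrict (B i) y ∈ s i} := by
  simp only [Set.ofPred_forall]
  exact isOpen_iInter_of_finite fun i => (hs i).preimage (blockRestrict (B i)).continuous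

section BlockProduct

variable {f : ∀ i, (B i → ℝ) → B i → ℝ} {ψ : (ι → ℝ) → ι → ℝ}
  (hψ : ∀ i, Function.Semiconj (blockRestrict (B i)) ψ (f i))
include hψ

lemma apply_eq_of_semiconj_blockRestrict {i : κ} {a : ι} (ha : a ∈ B i) (y : ι → ℝ) :
    ψ y a = f i (blockRestrict (B i) y) ⟨a, ha⟩ :=
  congrFun (hψ i y) ⟨a, ha⟩

lemma apply_congr_of_semiconj_blockRestrict {i : κ} {a : ι} (ha : a ∈ B i) {y z : ι → ℝ}
    (hyz : ∀ k ∈ B i, y k = z k) : ψ y a = ψ z a := by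
  have hrestrict : blockRestrict (B i) y = blockRestrict (B i) z := funext fun k => hyz k k.2
  simp only [apply_eq_of_semiconj_blockRestrict hψ ha, hrestrict]

lemma injOn_of_semiconj_blockRestrict (hcover : ∀ k, ∃ i, k ∈ B i) {s : ∀ i, Set (B i → ℝ)}
    (hf : ∀ i, (s i).InjOn (f i)) : {y | ∀ i, blockRestrict (B i) y ∈ s i}.InjOn ψ :=
  fun y hy z hz hyz => eq_of_blockRestrict_eq hcover fun i =>
    hf i (hy i) (hz i) (by rw [← hψ i y, ← hψ i z, hyz])

lemma map_zero_of_semiconj_blockRestrict (hcover : ∀ k, ∃ i, k ∈ B i) (hf : ∀ i, f i 0 = 0) :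
    ψ 0 = 0 :=
  eq_of_blockRestrict_eq hcover fun i => by rw [hψ i 0, map_zero, hf i]

lemma apply_eq_zero_of_semiconj_blockRestrict (hB : Pairwise fun i j => Disjoint (B i) (B j))
    (hcover : ∀ k, ∃ i, k ∈ B i) (hf : ∀ i, f i 0 = 0) {i : κ} {y : ι → ℝ}
    (hy : ∀ k ∉ B i, y k = 0) : ∀ k ∉ B i, ψ y k = 0 := by
  intro k hk
  obtain ⟨j, hkj⟩ := hcover k
  have hij : i ≠ j := fun hij => hk (hij ▸ hkj)
  rw [apply_eq_of_semiconj_blockRestrict hψ hkj, blockRestrict_eq_zero_of_disjoint (hB hij) hy, hf,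
    Pi.zero_apply]

lemma contDiffOn_of_semiconj_blockRestrict [Fintype ι] (hcover : ∀ k, ∃ i, k ∈ B i)
    {n : WithTop ℕ∞} {s : ∀ i, Set (B i → ℝ)} (hf : ∀ i, ContDiffOn ℝ n (f i) (s i)) :
    ContDiffOn ℝ n ψ {y | ∀ i, blockRestrict (B i) y ∈ s i} := by
  refine contDiffOn_pi.2 fun a => ?_
  obtain ⟨i, ha⟩ := hcover a
  simp only [apply_eq_of_semiconj_blockRestrict hψ ha]
  have hcomp : ContDiffOn ℝ n (fun y => f i (blockRestrict (B i) y))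
      {y | ∀ i, blockRestrict (B i) y ∈ s i} :=
    (hf i).comp (blockRestrict (B i)).contDiff.contDiffOn fun _ hy => hy i
  exact contDiffOn_pi.1 hcomp ⟨a, ha⟩

variable [Finite ι]

lemma blockRestrict_fderiv_of_semiconj {y : ι → ℝ} (hψy : DifferentiableAt ℝ ψ y) {i : κ}
    (hf : DifferentiableAt ℝ (f i) (blockRestrict (B i) y)) (v : ι → ℝ) :
    blockRestrict (B i) (fderiv ℝ ψ y v) =
      fderiv ℝ (f i) (blockRestrict (B i) y) (blockRestrict (B i) v) := by
  cases nonempty_fintype ι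
  have hleft := (blockRestrict (B i)).hasFDerivAt.comp y hψy.hasFDerivAt
  have hright := hf.hasFDerivAt.comp y (blockRestrict (B i)).hasFDerivAt
  rw [(hψ i).comp_eq] at hleft
  exact congrArg (· v) (hleft.unique hright)

lemma exists_continuousLinearEquiv_fderiv_eq_of_semiconj (hcover : ∀ k, ∃ i, k ∈ B i) {y : ι → ℝ}
    (hψy : DifferentiableAt ℝ ψ y)
    (hf : ∀ i, DifferentiableAt ℝ (f i) (blockRestrict (B i) y))
    (hdet : ∀ i, (fderiv ℝ (f i) (blockRestrict (B i) y)).det ≠ 0) :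
    ∃ L : (ι → ℝ) ≃L[ℝ] (ι → ℝ), fderiv ℝ ψ y = L := by
  cases nonempty_fintype ι
  have hinj : Function.Injective (fderiv ℝ ψ y : (ι → ℝ) →ₗ[ℝ] (ι → ℝ)) := fun v w hvw => by
    refine eq_of_blockRestrict_eq hcover fun i => ?_
    refine (ContinuousLinearMap.toContinuousLinearEquivOfDetNeZero _ (hdet i)).injective ?_
    simp only [ContinuousLinearMap.toContinuousLinearEquivOfDetNeZero_apply,
      ← blockRestrict_fderiv_of_semiconj hψ hψy (hf i)]
    exact congrArg _ hvw
  exact ⟨(LinearEquiv.ofInjectiveEndo _ hinj).toContinuousLinearEquiv, rfl⟩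

end BlockProduct

/-- The Jacobian matrix of the components of `ψ` in the block `S` with respect to the variables in
`S`; for `ι = Fin m` its determinant is `blockDet`. -/
def blockJacobian [DecidableEq ι] (S : Finset ι) (ψ : (ι → ℝ) → ι → ℝ) (y : ι → ℝ) :
    Matrix S S ℝ :=
  .of fun a k => fderiv ℝ (fun z => ψ z a) y (Pi.single k.1 1)

lemma det_blockJacobian_of_semiconj [DecidableEq ι] [Finite ι] {S : Finset ι}
    {f : (S → ℝ) → S → ℝ} {ψ : (ι → ℝ) → ι → ℝ} (hψ : Function.Semiconj (blockRestrict S) ψ f)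
    {y : ι → ℝ} (hf : DifferentiableAt ℝ f (blockRestrict S y)) :
    (blockJacobian S ψ y).det = (fderiv ℝ f (blockRestrict S y)).det := by
  cases nonempty_fintype ι
  rw [ContinuousLinearMap.det, ← LinearMap.det_toMatrix']
  congr 1
  ext a k
  have hcoord : HasFDerivAt (fun z => ψ z a)
      (.proj a ∘L fderiv ℝ f (blockRestrict S y) ∘L blockRestrict S) y := by
    have hcomp := (hasFDerivAt_apply a _).comp y
      (hf.hasFDerivAt.comp y (blockRestrict S).hasFDerivAt)
    exact hcomp.congr_of_eventuallyEq (.of_forall fun z => congrFun (hψ z) a)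
  have hsingle : blockRestrict S (Pi.single k.1 1) = Pi.single k 1 := by
    ext b
    simp only [blockRestrict_apply, Pi.single_apply, Subtype.ext_iff]
  simp [blockJacobian, hcoord.fderiv, hsingle, LinearMap.toMatrix'_apply]

lemma mul_prod_abs_det_blockJacobian_eq_one [DecidableEq ι] [Finite ι] [Fintype κ]
    (hB : Pairwise fun i j => Disjoint (B i) (B j)) (hcover : ∀ k, ∃ i, k ∈ B i)
    {f : ∀ i, (B i → ℝ) → B i → ℝ} {ψ : (ι → ℝ) → ι → ℝ}
    (hψ : ∀ i, Function.Semiconj (blockRestrict (B i)) ψ (f i)) (hf0 : ∀ i, f i 0 = 0)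
    {h : (ι → ℝ) → ℝ} (h0 : 0 < h 0) {i : κ} {y : ι → ℝ} (hy : ∀ k ∉ B i, y k = 0)
    (hψy : 0 < h (ψ y)) (hf : ∀ j, DifferentiableAt ℝ (f j) (blockRestrict (B j) y))
    (hdet : ∀ j, blockDensity h (Fintype.card κ) (B j) (f j (blockRestrict (B j) y)) *
      (fderiv ℝ (f j) (blockRestrict (B j) y)).det = 1) :
    h (ψ y) * ∏ j, |(blockJacobian (B j) ψ y).det| = 1 := by
  have hψF : ∀ k ∉ B i, ψ y k = 0 := apply_eq_zero_of_semiconj_blockRestrict hψ hB hcover hf0 hy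
  have hprod : h (ψ y) * ∏ j, (blockJacobian (B j) ψ y).det = 1 := by
    rw [← prod_blockDensity_blockRestrict hB h0 hψF, ← Finset.prod_mul_distrib]
    refine Finset.prod_eq_one fun j _ => ?_
    rw [hψ j y, det_blockJacobian_of_semiconj (hψ j) (hf j), hdet j]
  rw [← Finset.abs_prod, ← abs_of_pos hψy, ← abs_mul, hprod, abs_one]

end Blocks

theorem stmt9_general {ι κ : Type*} [Fintype ι] [DecidableEq ι] [Fintype κ] {r : ℕ∞} (hr : r ≠ 0)
    (B : κ → Finset ι) (hBne : ∀ i, (B i).Nonempty)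
    (hBdisj : Pairwise fun i j => Disjoint (B i) (B j)) (hBcover : ∀ k, ∃ i, k ∈ B i)
    (h : (ι → ℝ) → ℝ) (V : Set (ι → ℝ)) (hV : IsOpen V) (h0V : (0 : ι → ℝ) ∈ V)
    (hsm : ContDiffOn ℝ r h V) (hpos : ∀ x ∈ V, 0 < h x) :
    ∃ (U : Set (ι → ℝ)) (ψ : (ι → ℝ) → (ι → ℝ)),
      IsOpen U ∧ (0 : ι → ℝ) ∈ U ∧ ψ 0 = 0 ∧ ContDiffOn ℝ r ψ U ∧ Set.InjOn ψ U ∧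
      (∀ y ∈ U, ∃ L : (ι → ℝ) ≃L[ℝ] (ι → ℝ), fderiv ℝ ψ y = L) ∧
      (∀ i, ∀ a ∈ B i, ∀ y ∈ U, ∀ z ∈ U, (∀ k ∈ B i, y k = z k) → ψ y a = ψ z a) ∧
      (∀ y ∈ U, ψ y ∈ V) ∧
      (∀ y ∈ U, (∃ i, ∀ k, k ∉ B i → y k = 0) →
        h (ψ y) * ∏ i, |(blockJacobian (B i) ψ y).det| = 1) := by
  have h0 : 0 < h 0 := hpos 0 h0V
  choose f h0f hf0 hfsm hfdet using fun i =>
    exists_openPartialHomeomorph_blockDensity_mul_det_fderiv_eq_one hr hV h0V hsm h0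
      (Fintype.card κ) (hBne i)
  obtain ⟨ψ, hψ⟩ := exists_semiconj_blockRestrict hBdisj hBcover fun i => f i
  let W : Set (ι → ℝ) := {y | ∀ i, blockRestrict (B i) y ∈ (f i).source}
  have hW : IsOpen W := isOpen_setOf_forall_blockRestrict_mem fun i => (f i).open_source
  have hψ0 : ψ 0 = 0 := map_zero_of_semiconj_blockRestrict hψ hBcover hf0
  have hψsm : ContDiffOn ℝ r ψ W := contDiffOn_of_semiconj_blockRestrict hψ hBcover hfsm
  have hψinj : W.InjOn ψ := injOn_of_semiconj_blockRestrict hψ hBcover fun i => (f i).injOn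
  have hψd {y : ι → ℝ} (hy : y ∈ W) : DifferentiableAt ℝ ψ y :=
    (hψsm.contDiffAt (hW.mem_nhds hy)).differentiableAt (mod_cast hr)
  have hfd {y : ι → ℝ} (hy : y ∈ W) (i : κ) : DifferentiableAt ℝ (f i) (blockRestrict (B i) y) :=
    ((hfsm i).contDiffAt ((f i).open_source.mem_nhds (hy i))).differentiableAt (mod_cast hr)
  refine ⟨W ∩ ψ ⁻¹' V, ψ, hψsm.continuousOn.isOpen_inter_preimage hW hV,
    ⟨fun i => by simpa using h0f i, by simpa [hψ0] using h0V⟩, hψ0,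
    hψsm.mono Set.inter_subset_left, hψinj.mono Set.inter_subset_left, fun y ⟨hyW, _⟩ => ?_,
    fun i a ha y _ z _ hyz => apply_congr_of_semiconj_blockRestrict hψ ha hyz,
    fun y hy => hy.2, fun y ⟨hyW, hyV⟩ ⟨i, hi⟩ => ?_⟩
  · exact exists_continuousLinearEquiv_fderiv_eq_of_semiconj hψ hBcover (hψd hyW) (hfd hyW)
      fun i => right_ne_zero_of_mul_eq_one (hfdet i _ (hyW i))
  · exact mul_prod_abs_det_blockJacobian_eq_one hBdisj hBcover hψ hf0 h0 hi (hpos _ hyV) (hfd hyW)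
      fun j => hfdet j _ (hyW j)

/-- Every smooth positive density `h` near `0` can be normalized along
the union of the coordinate subspaces `F_i` by a block-product diffeomorphism `ψ`:
the transformed density `(h ∘ ψ) · ∏ |det Dψ_i|` equals `1` at all points of
`F_1 ∪ … ∪ F_n` near `0`. -/
theorem stmt9 {m n : ℕ} (hm : 2 ≤ m) (hn : 2 ≤ n)
    (B : Fin n → Finset (Fin m))
    (hBne : ∀ i, (B i).Nonempty)
    (hBdisj : ∀ i j, i ≠ j → Disjoint (B i) (B j))
    (hBcover : ∀ k, ∃ i, k ∈ B i)
    (h : (Fin m → ℝ) → ℝ)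
    (V : Set (Fin m → ℝ)) (hV : IsOpen V) (h0V : (0 : Fin m → ℝ) ∈ V)
    (hsm : ContDiffOn ℝ (⊤ : ℕ∞) h V) (hpos : ∀ x ∈ V, 0 < h x) :
    ∃ (U : Set (Fin m → ℝ)) (ψ : (Fin m → ℝ) → (Fin m → ℝ)),
      IsOpen U ∧ (0 : Fin m → ℝ) ∈ U ∧ ψ 0 = 0 ∧
      ContDiffOn ℝ (⊤ : ℕ∞) ψ U ∧ Set.InjOn ψ U ∧
      (∀ y ∈ U, ∃ L : (Fin m → ℝ) ≃L[ℝ] (Fin m → ℝ),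
        fderiv ℝ ψ y = (L : (Fin m → ℝ) →L[ℝ] (Fin m → ℝ))) ∧
      (∀ i : Fin n, ∀ a ∈ B i, ∀ y ∈ U, ∀ z ∈ U,
        (∀ k ∈ B i, y k = z k) → ψ y a = ψ z a) ∧
      (∀ y ∈ U, ψ y ∈ V) ∧
      (∀ y ∈ U, (∃ i : Fin n, ∀ k, k ∉ B i → y k = 0) →
        h (ψ y) * ∏ i, |blockDet B ψ i y| = 1) :=
  stmt9_general ENat.top_ne_zero B hBne hBdisj hBcover h V hV h0V hsm hpos
end
end

section
/- Let m ≥ 2 and let B_1,…,B_n (n ≥ 2) be a partition of {1,…,m} into nonempty blocks, and for each i let F_i = {x ∈ ℝ^m : x_k = 0 for all k ∉ B_i}. Let ψ be a smooth diffeomorphism from a neighborhood of 0 in ℝ^m onto an open subset of ℝ^m, of block-product form ψ(y) = (ψ_1(y_{B_1}),…,ψ_n(y_{B_n})) with ψ(0) = 0, such that ∏_{i=1}^n |det Dψ_i(y_{B_i})| = 1 at every point y near 0 lying in F_1 ∪ … ∪ F_n. Then each function y_{B_i} ↦ det Dψ_i(y_{B_i}) is constant on a neighborhood of 0, and ∏_{i=1}^n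 |det Dψ_i| = 1. -/
open MeasureTheory

noncomputable section

open Filter Topology

/-! On `F_i` every factor `|det Dψ_j|` with `j ≠ i` keeps its value at `0`, because it only sees
the coordinates in `B_j`. Hence the normalization on `F_i` forces `|det Dψ_i|` to be constant there,
and so near `0`, since `det Dψ_i` only sees the coordinates in `B_i`. The normalization also makes
`det Dψ_i` nonzero at `0`, so by continuity it cannot change sign near `0`. The projection onto
`F_i` is `y ↦ (B i).indicator y`. -/

section DependsOnWithin

variable {κ β : Type*} {α : κ → Type*}

/-- On `U`, the function `f` is a function of the coordinates in `s` alone. This is Mathlib's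
`DependsOn` relativized to a set `U`, and expresses that a map has block-product form on a
neighborhood only. -/
def DependsOnWithin (f : (∀ k, α k) → β) (s : Set κ) (U : Set (∀ k, α k)) : Prop :=
  ∀ x ∈ U, ∀ y ∈ U, (∀ k ∈ s, x k = y k) → f x = f y

theorem DependsOnWithin.comp_left {γ : Type*} {f : (∀ k, α k) → β} {s : Set κ}
    {U : Set (∀ k, α k)} (hf : DependsOnWithin f s U) (g : β → γ) :
    DependsOnWithin (g ∘ f) s U :=
  fun x hx y hy hxy => congrArg g (hf x hx y hy hxy)

theorem DependsOnWithin.fderiv {𝕜 F : Type*} [NontriviallyNormedField 𝕜] [Finite κ]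
    [∀ k, NormedAddCommGroup (α k)] [∀ k, NormedSpace 𝕜 (α k)]
    [NormedAddCommGroup F] [NormedSpace 𝕜 F]
    {f : (∀ k, α k) → F} {s : Set κ} {U : Set (∀ k, α k)}
    (hf : DependsOnWithin f s U) (hU : IsOpen U) :
    DependsOnWithin (fderiv 𝕜 f) s U := by
  cases nonempty_fintype κ
  intro x hx y hy hxy
  have hshift : Tendsto (fun w => w + (y - x)) (𝓝 x) (𝓝 y) := by
    simpa using (continuous_add_const (y - x)).tendsto x
  have hf_shift : f =ᶠ[𝓝 x] fun w => f (w + (y - x)) := by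
    filter_upwards [hU.mem_nhds hx, hshift (hU.mem_nhds hy)] with w hw hw'
    exact hf w hw _ hw' fun k hk => by simp [hxy k hk]
  rw [hf_shift.fderiv_eq, fderiv_comp_add_right, add_sub_cancel]

end DependsOnWithin

section ProductNormalization

variable {ι κ E : Type*} [Fintype ι] [Zero E] {B : ι → Set κ} {U : Set (κ → E)}

theorem continuous_pi_indicator [TopologicalSpace E] (s : Set κ) :
    Continuous fun y : κ → E => s.indicator y := by
  refine continuous_pi fun k => ?_
  by_cases hk : k ∈ s
  · simpa only [Set.indicator_of_mem hk] using continuous_apply k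
  · simpa only [Set.indicator_of_notMem hk] using continuous_const

theorem apply_eq_apply_zero_of_prod_indicator_eq {M : Type*} [CommMonoidWithZero M]
    [IsCancelMulZero M] (hB : Pairwise (Function.onFun Disjoint B))
    {g : ι → (κ → E) → M} (hg : ∀ i, DependsOnWithin (g i) (B i) U) (h0 : 0 ∈ U)
    (hne : ∏ j, g j 0 ≠ 0) {i : ι} {y : κ → E} (hy : y ∈ U) (hyi : (B i).indicator y ∈ U)
    (hprod : ∏ j, g j ((B i).indicator y) = ∏ j, g j 0) :
    g i y = g i 0 := by
  classical
  have hself : g i ((B i).indicator y) = g i y :=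
    hg i _ hyi y hy fun k hk => Set.indicator_of_mem hk y
  have hother : ∀ j ∈ Finset.univ.erase i, g j ((B i).indicator y) = g j 0 := fun j hj =>
    hg j _ hyi 0 h0 fun k hk => Set.indicator_of_notMem
      (Set.disjoint_left.1 (hB (Finset.ne_of_mem_erase hj)) hk) y
  rw [← Finset.mul_prod_erase _ _ (Finset.mem_univ i)] at hne
  rw [← Finset.mul_prod_erase _ _ (Finset.mem_univ i),
    ← Finset.mul_prod_erase _ _ (Finset.mem_univ i), hself, Finset.prod_congr rfl hother] at hprod
  exact mul_right_cancel₀ (right_ne_zero_of_mul hne) hprod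

theorem eventually_eq_of_abs_eq_abs {X R : Type*} [TopologicalSpace X] [AddCommGroup R]
    [LinearOrder R] [IsOrderedAddMonoid R] [TopologicalSpace R] [T1Space R] {f : X → R} {x : X}
    (hf : ContinuousAt f x) (hx : f x ≠ 0) (habs : ∀ᶠ y in 𝓝 x, |f y| = |f x|) :
    ∀ᶠ y in 𝓝 x, f y = f x := by
  filter_upwards [habs, hf.eventually_ne (self_ne_neg.2 hx)] with y hy hne
  exact (abs_eq_abs.1 hy).resolve_right hne

theorem eventually_apply_eq_apply_zero_of_prod_abs_eq_one [TopologicalSpace E] {R : Type*}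
    [CommRing R] [LinearOrder R] [IsStrictOrderedRing R] [TopologicalSpace R] [T1Space R]
    (hB : Pairwise (Function.onFun Disjoint B)) {f : ι → (κ → E) → R} (hU : U ∈ 𝓝 0)
    (hf : ∀ i, DependsOnWithin (f i) (B i) U) (hcont : ∀ i, ContinuousAt (f i) 0)
    (hnorm : ∀ y ∈ U, (∃ i, ∀ k, k ∉ B i → y k = 0) → ∏ i, |f i y| = 1) (i : ι) :
    ∀ᶠ y in 𝓝 0, f i y = f i 0 := by
  have h0 : (0 : κ → E) ∈ U := mem_of_mem_nhds hU
  have hone : ∏ j, |f j 0| = 1 := hnorm 0 h0 ⟨i, fun _ _ => rfl⟩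
  have hne : ∏ j, |f j 0| ≠ 0 := hone ▸ one_ne_zero
  have hproj : Tendsto (fun y : κ → E => (B i).indicator y) (𝓝 0) (𝓝 0) := by
    simpa only [Set.indicator_zero'] using (continuous_pi_indicator (B i)).tendsto (0 : κ → E)
  refine eventually_eq_of_abs_eq_abs (hcont i)
    (abs_ne_zero.1 (Finset.prod_ne_zero_iff.1 hne i (Finset.mem_univ i))) ?_
  filter_upwards [hU, hproj hU] with y hy hyi
  refine apply_eq_apply_zero_of_prod_indicator_eq hB (fun j => (hf j).comp_left abs)
    h0 hne hy hyi ?_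
  exact (hnorm _ hyi ⟨i, fun k hk => Set.indicator_of_notMem hk y⟩).trans hone.symm

end ProductNormalization

section BlockDet

variable {m n : ℕ} {B : Fin n → Finset (Fin m)} {ψ : (Fin m → ℝ) → (Fin m → ℝ)} {i : Fin n}

theorem dependsOnWithin_blockDet {U : Set (Fin m → ℝ)} (hU : IsOpen U)
    (hψ : ∀ a ∈ B i, DependsOnWithin (fun z => ψ z a) (B i) U) :
    DependsOnWithin (blockDet B ψ i) (B i) U := by
  intro x hx y hy hxy
  have hderiv : ∀ a : B i, fderiv ℝ (fun z => ψ z a) x = fderiv ℝ (fun z => ψ z a) y :=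
    fun a => (hψ a a.2).fderiv hU x hx y hy hxy
  simp only [blockDet, hderiv]

theorem continuousAt_blockDet {x : Fin m → ℝ}
    (hψ : ∀ a ∈ B i, ContDiffAt ℝ 1 (fun z => ψ z a) x) :
    ContinuousAt (blockDet B ψ i) x := by
  have hentry : ∀ a k : B i,
      ContinuousAt (fun y => fderiv ℝ (fun z => ψ z a) y (Pi.single (k : Fin m) 1)) x :=
    fun a k => ((hψ a a.2).continuousAt_fderiv one_ne_zero).clm_apply continuousAt_const
  have hmatrix : ContinuousAt (fun y => Matrix.of fun a k : B i =>
      fderiv ℝ (fun z => ψ z a) y (Pi.single (k : Fin m) 1)) x :=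
    continuousAt_pi.2 fun a => continuousAt_pi.2 (hentry a)
  exact (continuous_id.matrix_det.continuousAt).comp hmatrix

end BlockDet

theorem stmt10_general {m n : ℕ} {B : Fin n → Finset (Fin m)}
    (hBdisj : ∀ i j, i ≠ j → Disjoint (B i) (B j))
    {ψ : (Fin m → ℝ) → (Fin m → ℝ)}
    {U : Set (Fin m → ℝ)} (hU : IsOpen U) (h0U : (0 : Fin m → ℝ) ∈ U)
    (hψ : ContDiffAt ℝ 1 ψ 0)
    (hψblock : ∀ i : Fin n, ∀ a ∈ B i, ∀ y ∈ U, ∀ z ∈ U,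
      (∀ k ∈ B i, y k = z k) → ψ y a = ψ z a)
    (hnorm : ∀ y ∈ U, (∃ i : Fin n, ∀ k, k ∉ B i → y k = 0) →
      ∏ i, |blockDet B ψ i y| = 1) :
    ∃ U' : Set (Fin m → ℝ), IsOpen U' ∧ (0 : Fin m → ℝ) ∈ U' ∧ U' ⊆ U ∧
      (∀ i : Fin n, ∀ y ∈ U', ∀ z ∈ U', blockDet B ψ i y = blockDet B ψ i z) ∧
      (∀ y ∈ U', ∏ i, |blockDet B ψ i y| = 1) := by
  have hconst : ∀ᶠ y in 𝓝 0, ∀ i, blockDet B ψ i y = blockDet B ψ i 0 :=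
    eventually_all.2 <| eventually_apply_eq_apply_zero_of_prod_abs_eq_one
      (fun i j hij => Finset.disjoint_coe.2 (hBdisj i j hij)) (hU.mem_nhds h0U)
      (fun i => dependsOnWithin_blockDet hU (hψblock i))
      (fun i => continuousAt_blockDet fun a _ => contDiffAt_pi.1 hψ a) hnorm
  have hone : ∏ i, |blockDet B ψ i 0| = 1 := by
    rcases isEmpty_or_nonempty (Fin n) with _ | ⟨⟨i⟩⟩
    · exact Fintype.prod_empty _
    · exact hnorm 0 h0U ⟨i, fun _ _ => rfl⟩
  obtain ⟨U', hU', hU'open, h0U'⟩ := eventually_nhds_iff.1 (hconst.and (hU.mem_nhds h0U))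
  refine ⟨U', hU'open, h0U', fun y hy => (hU' y hy).2,
    fun i y hy z hz => ((hU' y hy).1 i).trans ((hU' z hz).1 i).symm, fun y hy => ?_⟩
  simpa only [(hU' y hy).1] using hone

/-- If a block-product diffeomorphism `ψ` fixing `0` satisfies
`∏ |det Dψ_i| = 1` at all points of `F_1 ∪ … ∪ F_n` near `0`, then each block Jacobian
determinant `det Dψ_i` is constant near `0` and `∏ |det Dψ_i| = 1` near `0`. -/
theorem stmt10 {m n : ℕ} (hm : 2 ≤ m) (hn : 2 ≤ n)
    (B : Fin n → Finset (Fin m))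
    (hBne : ∀ i, (B i).Nonempty)
    (hBdisj : ∀ i j, i ≠ j → Disjoint (B i) (B j))
    (hBcover : ∀ k, ∃ i, k ∈ B i)
    (ψ : (Fin m → ℝ) → (Fin m → ℝ))
    (U : Set (Fin m → ℝ)) (hU : IsOpen U) (h0U : (0 : Fin m → ℝ) ∈ U)
    (hψ0 : ψ 0 = 0)
    (hψsm : ContDiffOn ℝ (⊤ : ℕ∞) ψ U) (hψinj : Set.InjOn ψ U)
    (hψinv : ∀ y ∈ U, ∃ L : (Fin m → ℝ) ≃L[ℝ] (Fin m → ℝ),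
      fderiv ℝ ψ y = (L : (Fin m → ℝ) →L[ℝ] (Fin m → ℝ)))
    (hψblock : ∀ i : Fin n, ∀ a ∈ B i, ∀ y ∈ U, ∀ z ∈ U,
      (∀ k ∈ B i, y k = z k) → ψ y a = ψ z a)
    (hnorm : ∀ y ∈ U, (∃ i : Fin n, ∀ k, k ∉ B i → y k = 0) →
      ∏ i, |blockDet B ψ i y| = 1) :
    ∃ U' : Set (Fin m → ℝ), IsOpen U' ∧ (0 : Fin m → ℝ) ∈ U' ∧ U' ⊆ U ∧
      (∀ i : Fin n, ∀ y ∈ U', ∀ z ∈ U', blockDet B ψ i y = blockDet B ψ i z) ∧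
      (∀ y ∈ U', ∏ i, |blockDet B ψ i y| = 1) :=
  stmt10_general hBdisj hU h0U
    ((hψsm.contDiffAt (hU.mem_nhds h0U)).of_le (by norm_cast)) hψblock hnorm
end
end
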